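/- arXiv:0708.2280 — 2 statements merged into one kernel-verified Lean document; each statement's English description precedes it below -/
import Mathlib

section
/- For every odd prime number p, every finite p-group that is an E-group and has order at most p^7 is abelian. -/
/-- A group is an `E`-group if every element commutes with all of its
endomorphic images. -/
def IsEGroup (G : Type*) [Group G] : Prop :=
  ∀ (φ : G →* G) (x : G), x * φ x = φ x * x


open scoped commutatorElement

/-- 2-Engel condition: each element commutes with its conjugates. -/
def EngelTwo (G : Type*) [Group G] : Prop := ∀ x g : G, Commute x (g * x * g⁻¹)

lemma ring_engel {R : Type*} [Ring R] {x y x' y' : R} (hx : (x - 1) * (x - 1) = 0)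
    (hy : (y - 1) * (y - 1) = 0) (hxy : (x * y - 1) * (x * y - 1) = 0)
    (hx' : x * x' = 1) (hx'' : x' * x = 1) (hy' : y * y' = 1) (hy'' : y' * y = 1) :
    (x - 1) * (y - 1) + (y - 1) * (x - 1) = 0 ∧
      x * y * x' * y' - 1 = 2 * ((x - 1) * (y - 1)) := by
  obtain ⟨X, rfl⟩ : ∃ X, x = X + 1 := ⟨x - 1, by simp⟩
  obtain ⟨Y, rfl⟩ : ∃ Y, y = Y + 1 := ⟨y - 1, by simp⟩
  simp only [add_sub_cancel_right] at *
  have e1 : X * Y + Y * X + Y * X * Y + X * Y * X + X * Y * X * Y = 0 := by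
    have : ((X + 1) * (Y + 1) - 1) * ((X + 1) * (Y + 1) - 1) =
        X * Y + Y * X + Y * X * Y + X * Y * X + X * Y * X * Y + X * X + Y * Y + (X * X) * Y
         + X * (Y * Y) := by noncomm_ring
    rw [this, hx, hy] at hxy
    simpa using hxy
  have e2 : X * Y * X + X * Y * X * Y = 0 := by
    have h : X * (X * Y + Y * X + Y * X * Y + X * Y * X + X * Y * X * Y) =
      X * Y * X + X * Y * X * Y + (X * X) * Y + (X * X) * Y * X + (X * X) * Y * X * Y := by
      noncomm_ring
    rw [e1, hx] at h
    simpa using h.symm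
  have e3 : X * Y * X * Y = 0 := by
    have h : (X * Y * X + X * Y * X * Y) * Y = X * Y * X * Y + X * Y * X * (Y * Y) := by
      noncomm_ring
    rw [e2, hy] at h
    simpa using h.symm
  have e4 : X * Y * X = 0 := by simpa [e3] using e2
  have e5 : Y * X * Y = 0 := by
    have h : Y * (X * Y + Y * X + Y * X * Y + X * Y * X + X * Y * X * Y) =
      Y * X * Y + (Y * Y) * X + (Y * Y) * X * Y + Y * (X * Y * X) + Y * (X * Y * X) * Y := by
      noncomm_ring
    rw [e1, hy, e4] at h
    simpa using h.symm
  have e6 : X * Y + Y * X = 0 := by simpa [e3, e4, e5] using e1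
  refine ⟨e6, ?_⟩
  have hx1 : x' = 1 - X := by
    have h : x' * ((X + 1) * (1 - X)) = x' * (1 - X * X) := by noncomm_ring
    rw [← mul_assoc, hx'', hx] at h
    simpa using h.symm
  have hy1 : y' = 1 - Y := by
    have h : y' * ((Y + 1) * (1 - Y)) = y' * (1 - Y * Y) := by noncomm_ring
    rw [← mul_assoc, hy'', hy] at h
    simpa using h.symm
  have hYX : Y * X = - (X * Y) := by rw [← sub_eq_zero, sub_neg_eq_add, add_comm]; exact e6
  have key : (X + 1) * (Y + 1) * x' * y' - 1 = X * Y - Y * X := by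
    rw [hx1, hy1]
    have : (X + 1) * (Y + 1) * (1 - X) * (1 - Y) - 1 = X * Y - Y * X + X * Y * X * Y - X * Y * X
      + Y * X * Y - X * (Y * Y) - X * X - Y * Y + X * X * Y := by noncomm_ring
    rw [this, e3, e4, e5, hx, hy]
    simp
  rw [key, hYX]
  noncomm_ring

section Engel

variable {G : Type*} [Group G]

lemma EngelTwo.commute_normalClosure (h : EngelTwo G) (a : G) {x y : G}
    (hx : x ∈ Subgroup.normalClosure {a}) (hy : y ∈ Subgroup.normalClosure {a}) : Commute x y := by
  have h1 : ∀ g k : G, Commute (g * a * g⁻¹) (k * a * k⁻¹) := by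
    intro g k
    have := h (g * a * g⁻¹) (k * g⁻¹)
    convert this using 1
    group
  have h2 : ∀ k : G, ∀ x ∈ Subgroup.normalClosure {a}, Commute x (k * a * k⁻¹) := by
    intro k x hx
    have : Subgroup.normalClosure {a} ≤ Subgroup.centralizer {k * a * k⁻¹} := by
      unfold Subgroup.normalClosure
      rw [Subgroup.closure_le]
      intro z hz
      obtain ⟨b, hb, hbz⟩ := Group.mem_conjugatesOfSet_iff.1 hz
      obtain ⟨c, rfl⟩ := isConj_iff.1 hbz
      rw [Set.mem_singleton_iff.1 hb]
      simp only [SetLike.mem_coe, Subgroup.mem_centralizer_singleton_iff]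
      exact (h1 c k).eq
    exact Subgroup.mem_centralizer_singleton_iff.1 (this hx)
  have : Subgroup.normalClosure {a} ≤ Subgroup.centralizer {x} := by
    conv_lhs => unfold Subgroup.normalClosure
    rw [Subgroup.closure_le]
    intro z hz
    obtain ⟨b, hb, hbz⟩ := Group.mem_conjugatesOfSet_iff.1 hz
    obtain ⟨c, rfl⟩ := isConj_iff.1 hbz
    rw [Set.mem_singleton_iff.1 hb]
    simp only [SetLike.mem_coe, Subgroup.mem_centralizer_singleton_iff]
    exact (h2 c x hx).eq.symm
  exact (Subgroup.mem_centralizer_singleton_iff.1 (this hy)).symm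

lemma EngelTwo.comm_left (h : EngelTwo G) (x y : G) : Commute x ⁅x, y⁆ := by
  have : Commute x (y * x⁻¹ * y⁻¹) := by
    have := (h x y).inv_right
    convert this using 1; group
  have h2 := (Commute.refl x).mul_right this
  have e : ⁅x, y⁆ = x * (y * x⁻¹ * y⁻¹) := by simp [commutatorElement_def, mul_assoc]
  rw [e]; exact h2

lemma EngelTwo.comm_right (h : EngelTwo G) (x y : G) : Commute y ⁅x, y⁆ := by
  rw [← commutatorElement_inv]
  exact (h.comm_left y x).inv_right

lemma EngelTwo.comm_inv_right (h : EngelTwo G) (x y : G) : ⁅x, y⁻¹⁆ = ⁅x, y⁆⁻¹ := by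
  have := h.comm_right x y
  have h3 : y⁻¹ * ⁅x,y⁆⁻¹ * y = ⁅x,y⁆⁻¹ := by
    rw [mul_assoc, this.inv_right.symm.eq, ← mul_assoc]; simp
  rw [← h3]
  simp [commutatorElement_def, mul_assoc]

lemma EngelTwo.main (h : EngelTwo G) (a x y : G) :
    ⁅x, ⁅y, a⁆⁆ * ⁅y, ⁅x, a⁆⁆ = 1 ∧ ⁅⁅x, y⁆, a⁆ = ⁅x, ⁅y, a⁆⁆ ^ 2 := by
  let A := Subgroup.normalClosure {a}
  let _ : CommGroup A := { (inferInstance : Group A) with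
    mul_comm := fun u v => Subtype.ext (h.commute_normalClosure a u.2 v.2).eq }
  let ρ : G → AddMonoid.End (Additive A) := fun g =>
    MonoidHom.toAdditive (MulAut.conjNormal g : A ≃* A).toMonoidHom
  have ρval : ∀ g (m : Additive A), ((ρ g m).toMul : G) = g * (m.toMul : G) * g⁻¹ := by
    intro g m; rfl
  have ρmul : ∀ g k, ρ (g * k) = ρ g * ρ k := by
    intro g k; ext m
    change ((ρ (g*k) m).toMul : G) = ((ρ g (ρ k m)).toMul : G)
    rw [ρval, ρval, ρval]; group
  have ρone : ρ 1 = 1 := by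
    ext m
    change ((ρ 1 m).toMul : G) = (m.toMul : G)
    rw [ρval]; group
  have subval : ∀ g (m : Additive A), (((ρ g - 1) m).toMul : G) = ⁅g, (m.toMul : G)⁆ := by
    intro g m
    change ((ρ g m).toMul : G) / (m.toMul : G) = _
    rw [ρval, commutatorElement_def, div_eq_mul_inv]
  have sq : ∀ g, (ρ g - 1) * (ρ g - 1) = 0 := by
    intro g; ext m
    change (((ρ g - 1) ((ρ g - 1) m)).toMul : G) = 1
    rw [subval, subval, commutatorElement_eq_one_iff_commute]
    exact h.comm_left g _
  have key := ring_engel (x := ρ x) (y := ρ y) (x' := ρ x⁻¹) (y' := ρ y⁻¹) (sq x) (sq y)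
    (by rw [← ρmul]; exact sq _) (by rw [← ρmul]; simp [ρone]) (by rw [← ρmul]; simp [ρone])
    (by rw [← ρmul]; simp [ρone]) (by rw [← ρmul]; simp [ρone])
  let m : Additive A := Additive.ofMul ⟨a, Subgroup.subset_normalClosure rfl⟩
  have k1 := congrArg (fun f : AddMonoid.End (Additive A) => ((f m).toMul : G)) key.1
  have k2 := congrArg (fun f : AddMonoid.End (Additive A) => ((f m).toMul : G)) key.2
  constructor
  · change (((ρ x - 1) ((ρ y - 1) m)).toMul : G) * (((ρ y - 1) ((ρ x - 1) m)).toMul : G) = 1 at k1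
    rw [subval, subval, subval, subval] at k1
    exact k1
  · rw [← ρmul, ← ρmul, ← ρmul, two_mul] at k2
    change (((ρ (x * y * x⁻¹ * y⁻¹) - 1) m).toMul : G) = (((ρ x - 1) ((ρ y - 1) m)).toMul : G)
      * (((ρ x - 1) ((ρ y - 1) m)).toMul : G) at k2
    rw [subval, subval, subval] at k2
    rw [pow_two]
    exact k2

lemma EngelTwo.swap1 (h : EngelTwo G) (x y a : G) : ⁅x, ⁅y, a⁆⁆ = ⁅y, ⁅x, a⁆⁆⁻¹ :=
  eq_inv_of_mul_eq_one_left (h.main a x y).1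

lemma EngelTwo.swap2 (h : EngelTwo G) (x y a : G) : ⁅x, ⁅y, a⁆⁆ = ⁅x, ⁅a, y⁆⁆⁻¹ := by
  rw [← h.comm_inv_right, commutatorElement_inv]

lemma EngelTwo.cube (h : EngelTwo G) (x y a : G) : ⁅x, ⁅y, a⁆⁆ ^ 3 = 1 := by
  have h1 := (h.main a x y).2
  rw [← commutatorElement_inv, h.swap1 a x y, h.swap2 x a y] at h1
  simp only [inv_inv] at h1
  rw [pow_succ, ← h1, inv_mul_cancel]

end Engel


open scoped commutatorElement

section Omega
variable {G : Type*} [Group G]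

lemma mem_zpowers_pow_of_coprime {p : ℕ} {u : G} {s k : ℕ} (hu : u ^ p ^ s = 1)
    (hk : Nat.Coprime k p) : u ∈ Subgroup.zpowers (u ^ k) := by
  have h1 : (orderOf u).Coprime k :=
    Nat.Coprime.coprime_dvd_left (orderOf_dvd_of_pow_eq_one hu) (Nat.Coprime.pow_left s hk.symm)
  obtain ⟨m, hm⟩ := exists_pow_eq_self_of_coprime (n := k) (x := u) h1.symm
  exact ⟨m, by simpa using hm⟩

lemma exists_char [Finite G] {p : ℕ} (hp : p.Prime) (r : ℕ)
    (hexp : Monoid.exponent (Abelianization G) = p ^ (r + 1)) :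
    ∃ (C : Type) (_ : Group C) (f : G →* C) (g : G), (∀ c : C, c ∈ Subgroup.zpowers (f g)) ∧
      orderOf (f g) = p ^ (r + 1) := by
  have : Fact p.Prime := ⟨hp⟩
  have : Finite (Abelianization G) := Quotient.finite _
  obtain ⟨g0, hg0⟩ := Monoid.exists_orderOf_eq_exponent
    (Monoid.ExponentExists.of_finite (G := Abelianization G))
  have hne : g0 ^ (p ^ r) ≠ 1 := by
    intro h
    have h1 := orderOf_dvd_of_pow_eq_one h
    rw [hg0, hexp] at h1
    have := (Nat.pow_dvd_pow_iff_le_right hp.one_lt).1 h1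
    omega
  have : NeZero (Monoid.exponent (Abelianization G)) := ⟨by rw [hexp]; positivity [hp.pos]⟩
  obtain ⟨φ, hφ⟩ := CommGroup.exists_apply_ne_one_of_hasEnoughRootsOfUnity (Abelianization G) ℂ hne
  obtain ⟨g, rfl⟩ := QuotientGroup.mk_surjective g0
  have hfin : Finite φ.range := Finite.of_surjective _ φ.rangeRestrict_surjective
  have hcyc : IsCyclic φ.range := inferInstance
  have hall : ∀ c : φ.range, c ^ (p ^ (r + 1)) = 1 := by
    rintro ⟨_, a, rfl⟩
    apply Subtype.ext
    simp only [Subgroup.coe_pow, ← map_pow, Subgroup.coe_one]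
    rw [← hexp, Monoid.pow_exponent_eq_one, map_one]
  let f : G →* φ.range := φ.rangeRestrict.comp Abelianization.of
  have hord : orderOf (f g) = p ^ (r + 1) := by
    apply orderOf_eq_prime_pow
    · intro h
      apply hφ
      have := congrArg Subtype.val h
      have h2 : φ (Abelianization.of g) ^ p ^ r = 1 := by simpa [f] using this
      rw [← map_pow] at h2; exact h2
    · exact hall _
  have hcard : Nat.card φ.range = p ^ (r + 1) := by
    apply Nat.dvd_antisymm
    · rw [← IsCyclic.exponent_eq_card]
      exact Monoid.exponent_dvd_of_forall_pow_eq_one hall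
    · rw [← hord]; exact orderOf_dvd_natCard _
  have hgen : ∀ c : φ.range, c ∈ Subgroup.zpowers (f g) := by
    intro c
    have : Subgroup.zpowers (f g) = ⊤ := by
      apply Subgroup.eq_top_of_card_eq
      rw [Nat.card_zpowers, hord, hcard]
    rw [this]; trivial
  exact ⟨φ.range, inferInstance, f, g, hgen, hord⟩

lemma omega_central [Finite G] {p : ℕ} (hp : p.Prime) (hpG : IsPGroup p G) (hE : IsEGroup G) :
    ∃ r, 1 ≤ r ∧ (∀ x : G, x ^ (p ^ r) ∈ commutator G) ∧
      (∀ u : G, u ^ (p ^ r) = 1 → u ∈ Subgroup.center G) := by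
  have : Fact p.Prime := ⟨hp⟩
  have : Finite (Abelianization G) := Quotient.finite _
  have hA : IsPGroup p (Abelianization G) := hpG.to_quotient _
  have hpow : ∀ x : G, x ^ (Monoid.exponent (Abelianization G)) ∈ commutator G := by
    intro x
    have : Abelianization.of x ^ (Monoid.exponent (Abelianization G)) = 1 :=
      Monoid.pow_exponent_eq_one _
    rw [← map_pow] at this
    exact (QuotientGroup.eq_one_iff _).1 this
  obtain ⟨n, hn⟩ := IsPGroup.iff_card.1 hA
  have h1 : Monoid.exponent (Abelianization G) ∣ p ^ n := by
    rw [← hn]; exact Group.exponent_dvd_nat_card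
  obtain ⟨r, -, hr⟩ := (Nat.dvd_prime_pow hp).1 h1
  rcases r with _ | r
  · have htop : commutator G = ⊤ := by
      rw [eq_top_iff]; intro x _
      simpa [hr] using hpow x
    have hnil : Group.IsNilpotent G := hpG.isNilpotent
    have hsub : Subsingleton G := by
      by_contra hns
      rw [not_subsingleton_iff_nontrivial] at hns
      exact (Group.IsSolvable.commutator_lt_top_of_nontrivial G).ne htop
    refine ⟨1, le_rfl, fun x => by rw [htop]; trivial, fun u _ => ?_⟩
    rw [Subsingleton.elim u 1]; exact one_mem _
  · obtain ⟨C, _, f, g, hgen, hord⟩ := exists_char hp r hr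
    refine ⟨r + 1, by omega, fun x => hr ▸ hpow x, fun u hu => ?_⟩
    have hd : orderOf u ∣ orderOf (f g) := by rw [hord]; exact orderOf_dvd_of_pow_eq_one hu
    let θ : C →* G := monoidHomOfForallMemZpowers hgen hd
    have hθ : θ (f g) = u := monoidHomOfForallMemZpowers_apply_gen hgen hd
    have hcop : ∀ (x : G) (k : ℕ), f x = (f g) ^ k → Nat.Coprime k p → Commute x u := by
      intro x k hk hc
      have := hE (θ.comp f) x
      simp only [MonoidHom.comp_apply, hk, map_pow, hθ] at this
      have hcm : Commute x (u ^ k) := this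
      obtain ⟨m, hm⟩ := mem_zpowers_pow_of_coprime hu hc
      rw [← hm]
      exact hcm.zpow_right m
    have hg : Commute g u := hcop g 1 (by simp) (by simp)
    rw [Subgroup.mem_center_iff]
    intro x
    change Commute x u
    have hk : ∃ k : ℕ, f x = (f g) ^ k := by
      have : IsOfFinOrder (f g) := by
        rw [← orderOf_pos_iff, hord]; exact pow_pos hp.pos _
      obtain ⟨k, hk⟩ := this.mem_powers_iff_mem_zpowers.2 (hgen (f x))
      exact ⟨k, hk.symm⟩
    obtain ⟨k, hk⟩ := hk
    by_cases hc : Nat.Coprime k p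
    · exact hcop x k hk hc
    · have hdvd : p ∣ k := by
        by_contra hnd
        exact hc ((Nat.Prime.coprime_iff_not_dvd hp).2 hnd).symm
      have h2 : Commute (x * g) u := by
        apply hcop (x * g) (k + 1)
        · rw [map_mul, hk, pow_succ]
        · apply Nat.Coprime.symm
          rw [Nat.Prime.coprime_iff_not_dvd hp]
          intro h3
          exact hp.one_lt.ne' (Nat.dvd_one.1 ((Nat.dvd_add_right hdvd).1 h3))
      have := h2.mul_left hg.inv_left
      simpa using this

end Omega


open scoped commutatorElement

section ClassTwo
variable {G : Type*} [Group G]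

lemma IsEGroup.engel (hE : IsEGroup G) : EngelTwo G := by
  intro x g
  have := hE (MulAut.conj g).toMonoidHom x
  simpa [Commute, SemiconjBy] using this

lemma mul_card_le_of_lt [Finite G] {p : ℕ} (hp : p.Prime) (hpG : IsPGroup p G)
    {H K : Subgroup G} (h : H < K) : p * Nat.card H ≤ Nat.card K := by
  have : Fact p.Prime := ⟨hp⟩
  obtain ⟨m, hm⟩ := IsPGroup.iff_card.1 (hpG.to_subgroup H)
  obtain ⟨n, hn⟩ := IsPGroup.iff_card.1 (hpG.to_subgroup K)
  have h1 : Nat.card H ∣ Nat.card K := Subgroup.card_dvd_of_le h.le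
  have h2 : Nat.card H ≠ Nat.card K := by
    intro h3
    exact h.ne (Subgroup.eq_of_le_of_card_ge h.le h3.ge)
  rw [hm, hn] at *
  have h4 := (Nat.pow_dvd_pow_iff_le_right hp.one_lt).1 h1
  have h5 : m ≠ n := fun h => h2 (by rw [h])
  rw [← pow_succ']
  exact Nat.pow_le_pow_right hp.pos (by omega)

lemma card_eq_ker_mul_range {A B : Type*} [Group A] [Group B] (f : A →* B) :
    Nat.card A = Nat.card f.ker * Nat.card f.range := by
  rw [← Subgroup.index_ker, Subgroup.card_mul_index]

lemma comm_mem_nc_left (a b : G) : ⁅a, b⁆ ∈ Subgroup.normalClosure {a} := by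
  have ha : a ∈ Subgroup.normalClosure {a} := Subgroup.subset_normalClosure rfl
  have h2 : b * a⁻¹ * b⁻¹ ∈ Subgroup.normalClosure {a} :=
    Subgroup.Normal.conj_mem inferInstance _ (inv_mem ha) b
  have := mul_mem ha h2
  rw [commutatorElement_def]
  simpa [mul_assoc] using this

lemma comm_mem_nc_right (a b : G) : ⁅a, b⁆ ∈ Subgroup.normalClosure {b} := by
  rw [← commutatorElement_inv]; exact inv_mem (comm_mem_nc_left b a)

lemma EngelTwo.cube_central (h : EngelTwo G) (x y : G) : ⁅x, y⁆ ^ 3 ∈ Subgroup.center G := by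
  rw [Subgroup.mem_center_iff]
  intro g
  set k := ⁅x, y⁆ with hk
  have h1 : ⁅g, k⁆ ^ 3 = 1 := h.cube g x y
  have h2 : Commute k ⁅g, k⁆ := h.comm_right g k
  have h3 : g * k * g⁻¹ = ⁅g, k⁆ * k := by simp [commutatorElement_def]
  have h4 : g * k ^ 3 * g⁻¹ = k ^ 3 := by
    rw [← conj_pow, h3, h2.symm.mul_pow, h1, one_mul]
  rw [mul_inv_eq_iff_eq_mul] at h4
  exact h4

lemma class_three_card [Finite G] (hpG : IsPGroup 3 G) (h : EngelTwo G)
    (hΩ : ∀ u : G, u ^ 3 = 1 → u ∈ Subgroup.center G) (a b c : G) (ht : ⁅a, ⁅b, c⁆⁆ ≠ 1) :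
    3 ^ 8 ≤ Nat.card G := by
  set u := ⁅a, b⁆ with hu
  set v := ⁅a, c⁆ with hv
  set w := ⁅b, c⁆ with hw
  have hua : Commute a u := h.comm_left a b
  have hub : Commute b u := h.comm_right a b
  have hva : Commute a v := h.comm_left a c
  have hvc : Commute c v := h.comm_right a c
  have hwb : Commute b w := h.comm_left b c
  have hwc : Commute c w := h.comm_right b c
  have hwa : ¬ Commute a w := fun hc => ht (commutatorElement_eq_one_iff_commute.2 hc)
  have hvb : ¬ Commute b v := by
    intro hc
    apply ht
    rw [h.swap1 a b c, commutatorElement_eq_one_iff_commute.2 hc, inv_one]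
  have huc : ¬ Commute c u := by
    intro hc
    apply ht
    rw [h.swap2 a b c, h.swap1 a c b, h.swap2 c a b, h.swap2 c b a,
      commutatorElement_eq_one_iff_commute.2 hc]
    simp
  have huv : Commute u v := h.commute_normalClosure a (comm_mem_nc_left a b) (comm_mem_nc_left a c)
  have huw : Commute u w := h.commute_normalClosure b (comm_mem_nc_right a b) (comm_mem_nc_left b c)
  have hvw : Commute v w := h.commute_normalClosure c (comm_mem_nc_right a c)
    (comm_mem_nc_right b c)
  let D := Subgroup.closure {u, v, w}
  have huD : u ∈ D := Subgroup.subset_closure (by simp)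
  have hvD : v ∈ D := Subgroup.subset_closure (by simp)
  have hwD : w ∈ D := Subgroup.subset_closure (by simp)
  have hDle : ∀ K : Subgroup G, u ∈ K → v ∈ K → w ∈ K → D ≤ K := by
    intro K h1 h2 h3
    rw [Subgroup.closure_le]
    rintro x (rfl | rfl | rfl) <;> assumption
  let C : G → Subgroup G := fun g => Subgroup.centralizer {g}
  have hC : ∀ g x, x ∈ C g ↔ Commute x g := fun g x => Subgroup.mem_centralizer_singleton_iff
  have hDu : D ≤ C u := hDle _ ((hC _ _).2 (Commute.refl u)) ((hC _ _).2 huv.symm)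
    ((hC _ _).2 huw.symm)
  have hDv : D ≤ C v := hDle _ ((hC _ _).2 huv) ((hC _ _).2 (Commute.refl _))
    ((hC _ _).2 hvw.symm)
  have hDw : D ≤ C w := hDle _ ((hC _ _).2 huw) ((hC _ _).2 hvw) ((hC _ _).2 (Commute.refl _))
  have hDcomm : ∀ x ∈ D, ∀ y ∈ D, Commute x y := by
    intro x hx y hy
    have : D ≤ C x := hDle _ ((hC _ _).2 ((hC _ _).1 (hDu hx)).symm)
      ((hC _ _).2 ((hC _ _).1 (hDv hx)).symm) ((hC _ _).2 ((hC _ _).1 (hDw hx)).symm)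
    exact ((hC _ _).1 (this hy)).symm
  let Z := Subgroup.center G
  have hp : Nat.Prime 3 := Nat.prime_three
  -- index of D
  have i1 : 3 * Nat.card (C w) ≤ Nat.card (⊤ : Subgroup G) := by
    apply mul_card_le_of_lt hp hpG
    rw [lt_top_iff_ne_top]
    intro hT
    exact hwa ((hC _ _).1 (hT ▸ Subgroup.mem_top a))
  have i2 : 3 * Nat.card (C w ⊓ C v : Subgroup G) ≤ Nat.card (C w) := by
    apply mul_card_le_of_lt hp hpG
    refine lt_of_le_of_ne inf_le_left fun hT => ?_
    have h1 : b ∈ C w := (hC _ _).2 hwb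
    rw [← hT] at h1
    exact hvb ((hC _ _).1 h1.2)
  have i3 : Nat.card D ≤ Nat.card (C w ⊓ C v : Subgroup G) :=
    Subgroup.card_le_of_le (le_inf hDw hDv)
  -- index of the center in D
  have j1 : 3 * Nat.card (D ⊓ C a : Subgroup G) ≤ Nat.card D := by
    apply mul_card_le_of_lt hp hpG
    refine lt_of_le_of_ne inf_le_left fun hT => ?_
    have h1 := hwD
    rw [← hT] at h1
    exact hwa ((hC _ _).1 h1.2).symm
  have j2 : 3 * Nat.card (D ⊓ C a ⊓ C b : Subgroup G) ≤ Nat.card (D ⊓ C a : Subgroup G) := by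
    apply mul_card_le_of_lt hp hpG
    refine lt_of_le_of_ne inf_le_left fun hT => ?_
    have h1 : v ∈ D ⊓ C a := ⟨hvD, (hC _ _).2 hva.symm⟩
    rw [← hT] at h1
    exact hvb ((hC _ _).1 h1.2).symm
  have j3 : 3 * Nat.card (D ⊓ C a ⊓ C b ⊓ C c : Subgroup G) ≤
      Nat.card (D ⊓ C a ⊓ C b : Subgroup G) := by
    apply mul_card_le_of_lt hp hpG
    refine lt_of_le_of_ne inf_le_left fun hT => ?_
    have h1 : u ∈ D ⊓ C a ⊓ C b := ⟨⟨huD, (hC _ _).2 hua.symm⟩, (hC _ _).2 hub.symm⟩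
    rw [← hT] at h1
    exact huc ((hC _ _).1 h1.2).symm
  have j4 : Nat.card (D ⊓ Z : Subgroup G) ≤ Nat.card (D ⊓ C a ⊓ C b ⊓ C c : Subgroup G) := by
    apply Subgroup.card_le_of_le
    have : ∀ g, Z ≤ C g := fun g x hx => (hC _ _).2 (Subgroup.mem_center_iff.1 hx g).symm
    exact le_inf (le_inf (inf_le_inf_left _ (this a)) (inf_le_right.trans (this b)))
      (inf_le_right.trans (this c))
  -- the cubing map
  let f : D →* G :=
    { toFun := fun x => (x : G) ^ 3
      map_one' := by simp
      map_mul' := fun x y => by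
        rw [Subgroup.coe_mul, (hDcomm x x.2 y y.2).mul_pow] }
  have k1 := card_eq_ker_mul_range f
  have k2 : Nat.card f.ker ≤ Nat.card (D ⊓ Z : Subgroup G) := by
    rw [Nat.card_congr (f.ker.equivMapOfInjective D.subtype D.subtype_injective).toEquiv]
    apply Subgroup.card_le_of_le
    rintro _ ⟨x, hx, rfl⟩
    exact ⟨x.2, hΩ _ hx⟩
  have k3 : Nat.card f.range ≤ Nat.card (D ⊓ Z : Subgroup G) := by
    apply Subgroup.card_le_of_le
    rintro _ ⟨x, rfl⟩
    refine ⟨pow_mem x.2 3, ?_⟩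
    let Z3 : Subgroup D := (Z.comap f)
    have : D ≤ Z3.map D.subtype := by
      apply hDle
      · exact ⟨⟨u, huD⟩, h.cube_central a b, rfl⟩
      · exact ⟨⟨v, hvD⟩, h.cube_central a c, rfl⟩
      · exact ⟨⟨w, hwD⟩, h.cube_central b c, rfl⟩
    obtain ⟨y, hy, hyx⟩ := this x.2
    rw [← Subtype.ext hyx]
    exact hy
  have hpos : 0 < Nat.card (D ⊓ Z : Subgroup G) := Nat.card_pos
  rw [Subgroup.card_top] at i1
  have k4 : Nat.card D ≤ Nat.card (D ⊓ Z : Subgroup G) * Nat.card (D ⊓ Z : Subgroup G) := by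
    rw [k1]; exact Nat.mul_le_mul k2 k3
  set z := Nat.card (D ⊓ Z : Subgroup G)
  have k5 : 27 * z ≤ z * z := by omega
  have k6 : 27 ≤ z := Nat.le_of_mul_le_mul_right k5 hpos
  omega

lemma class_two [Finite G] {p : ℕ} (hp : p.Prime) (hpG : IsPGroup p G) (hE : IsEGroup G)
    (hcard : Nat.card G ≤ p ^ 7) (x y z : G) : ⁅x, ⁅y, z⁆⁆ = 1 := by
  by_contra ht
  have h := hE.engel
  by_cases h3 : p = 3
  · subst h3
    obtain ⟨r, hr, -, hΩ⟩ := omega_central hp hpG hE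
    have := class_three_card hpG h (fun u hu => hΩ u (by
      obtain ⟨s, rfl⟩ := Nat.exists_eq_add_of_le hr
      rw [pow_add, pow_mul, pow_one, hu, one_pow])) x y z ht
    norm_num at this hcard
    omega
  · apply ht
    obtain ⟨k, hk⟩ := hpG ⁅x, ⁅y, z⁆⁆
    have h1 := h.cube x y z
    have hc : Nat.Coprime (p ^ k) 3 :=
      Nat.Coprime.pow_left k ((Nat.coprime_primes hp Nat.prime_three).2 h3)
    have := pow_gcd_eq_one.2 ⟨hk, h1⟩
    rwa [hc, pow_one] at this

lemma class_two' [Finite G] {p : ℕ} (hp : p.Prime) (hpG : IsPGroup p G) (hE : IsEGroup G)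
    (hcard : Nat.card G ≤ p ^ 7) : commutator G ≤ Subgroup.center G := by
  rw [commutator_def, Subgroup.commutator_le]
  intro x _ y _
  rw [Subgroup.mem_center_iff]
  intro g
  exact (commutatorElement_eq_one_iff_commute.1 (class_two hp hpG hE hcard g x y)).eq

end ClassTwo


open scoped commutatorElement

section Structure
variable {G : Type*} [Group G]

lemma c2_mul_left (hc : ∀ x y z : G, Commute z ⁅x, y⁆) (x y z : G) :
    ⁅x * y, z⁆ = ⁅x, z⁆ * ⁅y, z⁆ := by
  have h1 : ⁅x * y, z⁆ = x * ⁅y, z⁆ * x⁻¹ * ⁅x, z⁆ := by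
    simp [commutatorElement_def, mul_assoc]
  rw [h1, (hc y z x).eq, mul_inv_cancel_right, (hc x z ⁅y, z⁆).eq]

/-- In a class-two group, commutation with a fixed element is a homomorphism. -/
def commHom (hc : ∀ x y z : G, Commute z ⁅x, y⁆) (z : G) : G →* G where
  toFun x := ⁅x, z⁆
  map_one' := by simp
  map_mul' x y := c2_mul_left hc x y z

lemma c2_mul_right (hc : ∀ x y z : G, Commute z ⁅x, y⁆) (x y z : G) :
    ⁅x, y * z⁆ = ⁅x, y⁆ * ⁅x, z⁆ := by
  rw [← commutatorElement_inv, c2_mul_left hc, mul_inv_rev, commutatorElement_inv,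
    commutatorElement_inv, (hc x y ⁅x, z⁆).eq]

lemma c2_pow_left (hc : ∀ x y z : G, Commute z ⁅x, y⁆) (x z : G) (n : ℕ) :
    ⁅x ^ n, z⁆ = ⁅x, z⁆ ^ n := map_pow (commHom hc z) x n

lemma c2_pow_right (hc : ∀ x y z : G, Commute z ⁅x, y⁆) (x z : G) (n : ℕ) :
    ⁅x, z ^ n⁆ = ⁅x, z⁆ ^ n := by
  rw [← commutatorElement_inv, c2_pow_left hc, ← inv_pow, commutatorElement_inv]

lemma c2_mul_pow (hc : ∀ x y z : G, Commute z ⁅x, y⁆) (x y : G) (n : ℕ) :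
    (x * y) ^ n = x ^ n * y ^ n * ⁅y, x⁆ ^ (n.choose 2) := by
  induction n with
  | zero => simp
  | succ n ih =>
    have h1 : y ^ n * x = x * y ^ n * ⁅y, x⁆ ^ n := by
      rw [← c2_pow_left hc]
      rw [(hc (y ^ n) x (x * y ^ n)).eq]
      simp [commutatorElement_def, mul_assoc]
    have h2 : ∀ m, Commute (x * y) (⁅y, x⁆ ^ m) := fun m => (hc y x (x * y)).pow_right m
    have h3 : ∀ m, Commute y (⁅y, x⁆ ^ m) := fun m => (hc y x y).pow_right m
    rw [pow_succ, ih, mul_assoc, ← (h2 _).eq, Nat.choose_succ_succ' n 1, Nat.choose_one_right,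
      pow_add ⁅y, x⁆, ← mul_assoc, ← mul_assoc, mul_assoc (x ^ n) (y ^ n) x, h1, pow_succ x, pow_succ y]
    simp only [mul_assoc]
    rw [← mul_assoc (⁅y, x⁆ ^ n) y, ← (h3 n).eq]
    simp only [mul_assoc]

lemma c2_mul_pow_of_odd (hc : ∀ x y z : G, Commute z ⁅x, y⁆) {n : ℕ} (hn : Odd n) (x y : G)
    (h : ⁅y, x⁆ ^ n = 1) : (x * y) ^ n = x ^ n * y ^ n := by
  rw [c2_mul_pow hc]
  obtain ⟨k, rfl⟩ := hn
  have : (2 * k + 1).choose 2 = (2 * k + 1) * k := by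
    rw [Nat.choose_two_right]
    apply Nat.div_eq_of_eq_mul_left (by norm_num)
    simp; ring
  rw [this, pow_mul, h, one_pow, mul_one]

lemma commutator_le_of_gen (hc : ∀ x y z : G, Commute z ⁅x, y⁆) (S : Set G)
    (hS : Subgroup.closure (S ∪ Subgroup.center G) = ⊤) (K : Subgroup G)
    (hK : ∀ x ∈ S, ∀ y ∈ S, ⁅x, y⁆ ∈ K) : commutator G ≤ K := by
  have hz : ∀ z ∈ Subgroup.center G, ∀ x : G, ⁅x, z⁆ = 1 := fun z hz x =>
    commutatorElement_eq_one_iff_commute.2 (Subgroup.mem_center_iff.1 hz x)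
  have h1 : ∀ y ∈ S, ∀ x : G, ⁅x, y⁆ ∈ K := by
    intro y hy x
    have : (⊤ : Subgroup G) ≤ K.comap (commHom hc y) := by
      rw [← hS, Subgroup.closure_le]
      rintro x (hx | hx)
      · exact hK x hx y hy
      · change ⁅x, y⁆ ∈ K
        rw [← commutatorElement_inv, hz x hx]; simp
    exact this (Subgroup.mem_top x)
  have h2 : ∀ y x : G, ⁅x, y⁆ ∈ K := by
    intro y x
    have : (⊤ : Subgroup G) ≤ K.comap (commHom hc y) := by
      rw [← hS, Subgroup.closure_le]
      rintro x (hx | hx)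
      · change ⁅x, y⁆ ∈ K
        rw [← commutatorElement_inv]; exact inv_mem (h1 x hx y)
      · change ⁅x, y⁆ ∈ K
        rw [← commutatorElement_inv, hz x hx]; simp
    exact this (Subgroup.mem_top x)
  rw [commutator_def, Subgroup.commutator_le]
  intro x _ y _
  exact h2 y x

lemma card_sup_zpowers_le [Finite G] {p : ℕ} (hp : 0 < p) (H : Subgroup G) (g : G)
    (hn : ∀ h ∈ H, g * h * g⁻¹ ∈ H) (hg : g ^ p ∈ H) :
    Nat.card (H ⊔ Subgroup.zpowers g : Subgroup G) ≤ p * Nat.card H := by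
  have hN : g ∈ Subgroup.normalizer (H : Set G) := by
    exact Subgroup.mem_normalizer_fintype hn
  have hNle : Subgroup.zpowers g ≤ Subgroup.normalizer (H : Set G) := by
    rwa [Subgroup.zpowers_le]
  have hcov : ∀ x ∈ Subgroup.zpowers g ⊔ H, ∃ (i : Fin p) (h : H), g ^ (i : ℕ) * (h : G) = x := by
    intro x hx
    rw [← SetLike.mem_coe, Subgroup.coe_mul_of_left_le_normalizer_right _ _ hNle] at hx
    obtain ⟨y, ⟨k, rfl⟩, h, hh, rfl⟩ := hx
    have hp' : (p : ℤ) ≠ 0 := by exact_mod_cast hp.ne'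
    have e : k = ((k % p).toNat : ℤ) + p * (k / p) := by
      rw [Int.toNat_of_nonneg (Int.emod_nonneg k hp')]
      exact (Int.emod_add_mul_ediv k p).symm
    refine ⟨⟨(k % p).toNat, ?_⟩, ⟨(g ^ p) ^ (k / p) * h, mul_mem (zpow_mem hg _) hh⟩, ?_⟩
    · have := Int.emod_lt_of_pos k (by exact_mod_cast hp : (0 : ℤ) < p)
      have := Int.emod_nonneg k hp'
      omega
    · simp only
      rw [← mul_assoc]
      congr 1
      conv_rhs => rw [e, zpow_add, zpow_mul, zpow_natCast, zpow_natCast]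
  rw [sup_comm]
  choose F1 F2 hF using hcov
  have hinj : Function.Injective
      (fun x : (Subgroup.zpowers g ⊔ H : Subgroup G) => (F1 x x.2, F2 x x.2)) := by
    rintro ⟨x, hx⟩ ⟨y, hy⟩ hxy
    simp only [Prod.mk.injEq] at hxy
    apply Subtype.ext
    simp only
    rw [← hF x hx, ← hF y hy, hxy.1, hxy.2]
  have := Nat.card_le_card_of_injective _ hinj
  simpa [Nat.card_prod] using this

end Structure


open scoped commutatorElement

section Structure2
variable {G : Type*} [Group G]

/-- The power homomorphism. -/
def c2PowHom (hc : ∀ x y z : G, Commute z ⁅x, y⁆) {n : ℕ} (hn : Odd n)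
    (h : ∀ x y : G, ⁅x, y⁆ ^ n = 1) : G →* G where
  toFun x := x ^ n
  map_one' := one_pow n
  map_mul' x y := c2_mul_pow_of_odd hc hn x y (h y x)

lemma closure_sup_center (a b c : G) :
    Subgroup.center G ⊔ Subgroup.zpowers a ⊔ Subgroup.zpowers b ⊔ Subgroup.zpowers c ≤
    Subgroup.closure ({a, b, c} ∪ (Subgroup.center G : Set G)) := by
  refine sup_le (sup_le (sup_le ?_ ?_) ?_) ?_
  · intro x hx; exact Subgroup.subset_closure (Or.inr hx)
  all_goals
    rw [Subgroup.zpowers_le]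
    exact Subgroup.subset_closure (Or.inl (by simp))

lemma not_two_gen [Finite G] (hc : ∀ x y z : G, Commute z ⁅x, y⁆) {n : ℕ} (hn : Odd n)
    (h : ∀ x y : G, ⁅x, y⁆ ^ n = 1) (hG : ∀ x : G, x ^ n ∈ commutator G)
    (hΩ : ∀ x : G, x ^ n = 1 → x ∈ Subgroup.center G) (hna : ¬ ∀ x y : G, x * y = y * x)
    (a b : G) : Subgroup.center G ⊔ Subgroup.zpowers a ⊔ Subgroup.zpowers b ≠ ⊤ := by
  intro hT
  apply hna
  have h1 : Subgroup.closure ({a, b, b} ∪ (Subgroup.center G : Set G)) = ⊤ := by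
    rw [eq_top_iff, ← hT]
    exact le_trans le_sup_left (closure_sup_center a b b)
  have h2 : commutator G ≤ Subgroup.zpowers ⁅a, b⁆ := by
    apply commutator_le_of_gen hc _ h1
    have e : ⁅b, a⁆ ∈ Subgroup.zpowers ⁅a, b⁆ := by
      rw [← commutatorElement_inv a b]; exact inv_mem (Subgroup.mem_zpowers ⁅a, b⁆)
    rintro x (rfl | rfl | rfl) y (rfl | rfl | rfl) <;> simp [e]
  let f : G →* Subgroup.zpowers ⁅a, b⁆ := (c2PowHom hc hn h).codRestrict _ (fun x => h2 (hG x))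
  intro x y
  have hf : f.ker ≤ Subgroup.center G := by
    intro z hz
    exact hΩ z (congrArg Subtype.val hz)
  exact (f.isMulCommutative_of_isCyclic_of_ker_le_center hf).is_comm.comm x y

lemma structure_one [Finite G] (hc : ∀ x y z : G, Commute z ⁅x, y⁆) {p r : ℕ} (hp : p.Prime)
    (hodd : Odd p) (hpG : IsPGroup p G) (hcard : Nat.card G ≤ p ^ 7)
    (h : ∀ x y : G, ⁅x, y⁆ ^ (p ^ r) = 1) (hG : ∀ x : G, x ^ (p ^ r) ∈ commutator G)
    (hΩ : ∀ x : G, x ^ (p ^ r) = 1 → x ∈ Subgroup.center G)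
    (hna : ¬ ∀ x y : G, x * y = y * x) :
    (∀ x : G, x ^ p ∈ Subgroup.center G) ∧ Nat.card G = p ^ 3 * Nat.card (Subgroup.center G) ∧
    ∃ a b c : G, Subgroup.closure ({a, b, c} ∪ (Subgroup.center G : Set G)) = ⊤ := by
  have : Fact p.Prime := ⟨hp⟩
  have hle : commutator G ≤ Subgroup.center G := by
    rw [commutator_def, Subgroup.commutator_le]
    intro x _ y _
    rw [Subgroup.mem_center_iff]
    exact fun g => (hc x y g).eq
  let f := c2PowHom hc (hodd.pow (n := r)) h
  have k1 := card_eq_ker_mul_range f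
  have k2 : Nat.card f.ker ≤ Nat.card (Subgroup.center G) :=
    Subgroup.card_le_of_le (fun x hx => hΩ x hx)
  have k3 : Nat.card f.range ≤ Nat.card (Subgroup.center G) := by
    apply Subgroup.card_le_of_le
    rintro _ ⟨x, rfl⟩
    exact hle (hG x)
  obtain ⟨n, hn⟩ := IsPGroup.iff_card.1 hpG
  obtain ⟨k, hk⟩ := IsPGroup.iff_card.1 (hpG.to_subgroup (Subgroup.center G))
  have hup : Nat.card G ≤ p ^ 3 * Nat.card (Subgroup.center G) := by
    have h1 : Nat.card G ≤ Nat.card (Subgroup.center G) * Nat.card (Subgroup.center G) := by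
      rw [k1]; exact Nat.mul_le_mul k2 k3
    rw [hn] at hcard
    rw [hn, hk, ← pow_add] at h1
    rw [hn, hk, ← pow_add]
    have e1 := (Nat.pow_le_pow_iff_right hp.one_lt).1 h1
    have e2 := (Nat.pow_le_pow_iff_right hp.one_lt).1 hcard
    exact Nat.pow_le_pow_right hp.pos (by omega)
  have hnt := not_two_gen hc (hodd.pow (n := r)) h hG hΩ hna
  have hlt : ∀ (H : Subgroup G) (g : G), g ∉ H → H < H ⊔ Subgroup.zpowers g := by
    intro H g hg
    refine lt_of_le_of_ne le_sup_left fun he => hg ?_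
    rw [he]
    exact (le_sup_right : Subgroup.zpowers g ≤ _) (Subgroup.mem_zpowers g)
  have hex : ∀ H : Subgroup G, H ≠ ⊤ → ∃ g, g ∉ H := by
    intro H hH
    by_contra hcon
    push Not at hcon
    exact hH (eq_top_iff.2 fun x _ => hcon x)
  set Z := Subgroup.center G
  have main : ∀ a : G, a ∉ Z → ∃ b c : G,
      Nat.card (Z ⊔ Subgroup.zpowers a : Subgroup G) = p * Nat.card Z ∧
      Nat.card G = p ^ 3 * Nat.card Z ∧
      Z ⊔ Subgroup.zpowers a ⊔ Subgroup.zpowers b ⊔ Subgroup.zpowers c = ⊤ := by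
    intro a ha
    obtain ⟨b, hb⟩ := hex (Z ⊔ Subgroup.zpowers a) (by
      have := hnt a a
      rwa [sup_assoc, sup_idem] at this)
    obtain ⟨c, hcc⟩ := hex _ (hnt a b)
    have l1 := mul_card_le_of_lt hp hpG (hlt _ a ha)
    have l2 := mul_card_le_of_lt hp hpG (hlt _ b hb)
    have l3 := mul_card_le_of_lt hp hpG (hlt _ c hcc)
    have l4 := Subgroup.card_le_card_group
      (Z ⊔ Subgroup.zpowers a ⊔ Subgroup.zpowers b ⊔ Subgroup.zpowers c)
    have hp0 := hp.pos
    generalize hn1 : Nat.card (Z ⊔ Subgroup.zpowers a : Subgroup G) = n1 at *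
    generalize hn2 : Nat.card (Z ⊔ Subgroup.zpowers a ⊔ Subgroup.zpowers b : Subgroup G) = n2 at *
    generalize hn3 : Nat.card
      (Z ⊔ Subgroup.zpowers a ⊔ Subgroup.zpowers b ⊔ Subgroup.zpowers c : Subgroup G) = n3 at *
    have m2 : p * (p * n1) ≤ p * n2 := Nat.mul_le_mul_left p l2
    have m1 : p * (p * (p * Nat.card Z)) ≤ p * (p * n1) :=
      Nat.mul_le_mul_left p (Nat.mul_le_mul_left p l1)
    have e : p ^ 3 * Nat.card Z = p * (p * (p * Nat.card Z)) := by ring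
    refine ⟨b, c, ?_, by omega, ?_⟩
    · have : p * (p * n1) = p * (p * (p * Nat.card Z)) := by omega
      exact Nat.eq_of_mul_eq_mul_left hp0 (Nat.eq_of_mul_eq_mul_left hp0 this)
    · apply Subgroup.eq_top_of_card_eq
      omega
  refine ⟨?_, ?_⟩
  · intro x
    by_cases hx : x ∈ Z
    · exact pow_mem hx p
    · obtain ⟨b, c, h1, -, -⟩ := main x hx
      have h2 : Z.relIndex (Z ⊔ Subgroup.zpowers x) = p := by
        have h3 := Subgroup.card_mul_index (Z.subgroupOf (Z ⊔ Subgroup.zpowers x))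
        rw [Nat.card_congr (Subgroup.subgroupOfEquivOfLe
          (le_sup_left : Z ≤ Z ⊔ Subgroup.zpowers x)).toEquiv, h1, mul_comm p] at h3
        exact Nat.eq_of_mul_eq_mul_left Nat.card_pos h3
      have h4 := Subgroup.pow_relIndex_mem Z (K := Z ⊔ Subgroup.zpowers x) (g := x)
        ((le_sup_right : Subgroup.zpowers x ≤ _) (Subgroup.mem_zpowers x))
      rwa [h2] at h4
  · obtain ⟨a, ha⟩ := hex Z (by
      intro hT
      exact hna fun x y => (Subgroup.mem_center_iff.1 (hT ▸ Subgroup.mem_top y : y ∈ Z) x))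
    obtain ⟨b, c, -, h2, h3⟩ := main a ha
    refine ⟨h2, a, b, c, ?_⟩
    rw [eq_top_iff, ← h3]
    exact closure_sup_center a b c

lemma card_commutator_le [Finite G] (hc : ∀ x y z : G, Commute z ⁅x, y⁆) {p : ℕ} (hp : p.Prime)
    (h : ∀ x y : G, ⁅x, y⁆ ^ p = 1) (a b c : G)
    (hS : Subgroup.closure ({a, b, c} ∪ (Subgroup.center G : Set G)) = ⊤) :
    commutator G ≤ ⊥ ⊔ Subgroup.zpowers ⁅b, c⁆ ⊔ Subgroup.zpowers ⁅c, a⁆ ⊔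
      Subgroup.zpowers ⁅a, b⁆ ∧
    Nat.card (⊥ ⊔ Subgroup.zpowers ⁅b, c⁆ ⊔ Subgroup.zpowers ⁅c, a⁆ ⊔
      Subgroup.zpowers ⁅a, b⁆ : Subgroup G) ≤ p ^ 3 := by
  have hstep : ∀ (H : Subgroup G) (x y : G),
      Nat.card (H ⊔ Subgroup.zpowers ⁅x, y⁆ : Subgroup G) ≤ p * Nat.card H := by
    intro H x y
    apply card_sup_zpowers_le hp.pos
    · intro k hk
      rwa [← (hc x y k).eq, mul_inv_cancel_right]
    · rw [h]; exact one_mem _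
  constructor
  · apply commutator_le_of_gen hc _ hS
    set K := ⊥ ⊔ Subgroup.zpowers ⁅b, c⁆ ⊔ Subgroup.zpowers ⁅c, a⁆ ⊔ Subgroup.zpowers ⁅a, b⁆
    have h1 : ⁅b, c⁆ ∈ K := by
      refine (le_sup_of_le_left (le_sup_of_le_left le_sup_right) : Subgroup.zpowers ⁅b, c⁆ ≤ K) ?_
      exact Subgroup.mem_zpowers _
    have h2 : ⁅c, a⁆ ∈ K := by
      refine (le_sup_of_le_left le_sup_right : Subgroup.zpowers ⁅c, a⁆ ≤ K) ?_
      exact Subgroup.mem_zpowers _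
    have h3 : ⁅a, b⁆ ∈ K := by
      refine (le_sup_right : Subgroup.zpowers ⁅a, b⁆ ≤ K) ?_
      exact Subgroup.mem_zpowers _
    have h1' : ⁅c, b⁆ ∈ K := by rw [← commutatorElement_inv]; exact inv_mem h1
    have h2' : ⁅a, c⁆ ∈ K := by rw [← commutatorElement_inv]; exact inv_mem h2
    have h3' : ⁅b, a⁆ ∈ K := by rw [← commutatorElement_inv]; exact inv_mem h3
    rintro x (rfl | rfl | rfl) y (rfl | rfl | rfl) <;>
      first | assumption | (rw [commutatorElement_self]; exact one_mem _)
  · have s1 := hstep ⊥ b c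
    have s2 := hstep (⊥ ⊔ Subgroup.zpowers ⁅b, c⁆) c a
    have s3 := hstep (⊥ ⊔ Subgroup.zpowers ⁅b, c⁆ ⊔ Subgroup.zpowers ⁅c, a⁆) a b
    rw [Subgroup.card_bot, mul_one] at s1
    calc _ ≤ _ := s3
      _ ≤ p * (p * p) := Nat.mul_le_mul_left p (s2.trans (Nat.mul_le_mul_left p s1))
      _ = p ^ 3 := by ring

lemma structure_two [Finite G] (hc : ∀ x y z : G, Commute z ⁅x, y⁆) {p r : ℕ} (hp : p.Prime)
    (hodd : Odd p) (hpG : IsPGroup p G) (hcard : Nat.card G ≤ p ^ 7) (hr : 1 ≤ r)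
    (h : ∀ x y : G, ⁅x, y⁆ ^ (p ^ r) = 1) (hG : ∀ x : G, x ^ (p ^ r) ∈ commutator G)
    (hΩ : ∀ x : G, x ^ (p ^ r) = 1 → x ∈ Subgroup.center G)
    (hna : ¬ ∀ x y : G, x * y = y * x) :
    (∀ x y : G, ⁅x, y⁆ ^ p = 1) ∧ (∀ x : G, x ^ p ∈ commutator G) ∧
    (∀ x : G, x ^ p = 1 ↔ x ∈ Subgroup.center G) ∧
    Nat.card (commutator G) = p ^ 3 ∧
    Nat.card G = p ^ 3 * Nat.card (Subgroup.center G) ∧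
    ∃ a b c : G, Subgroup.closure ({a, b, c} ∪ (Subgroup.center G : Set G)) = ⊤ := by
  obtain ⟨hpz, hcardG, a, b, c, habc⟩ := structure_one hc hp hodd hpG hcard h hG hΩ hna
  have hle : commutator G ≤ Subgroup.center G := by
    rw [commutator_def, Subgroup.commutator_le]
    intro x _ y _
    rw [Subgroup.mem_center_iff]
    exact fun g => (hc x y g).eq
  have hcp : ∀ x y : G, ⁅x, y⁆ ^ p = 1 := by
    intro x y
    rw [← c2_pow_right hc, commutatorElement_eq_one_iff_commute]
    exact Subgroup.mem_center_iff.1 (hpz y) x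
  obtain ⟨g1, g2⟩ := card_commutator_le hc hp hcp a b c habc
  have hG' : Nat.card (commutator G) ≤ p ^ 3 := (Subgroup.card_le_of_le g1).trans g2
  let f := c2PowHom hc (hodd.pow (n := r)) h
  have k1 := card_eq_ker_mul_range f
  have k2 : f.ker ≤ Subgroup.center G := fun x hx => hΩ x hx
  have k2' := Subgroup.card_le_of_le k2
  have k3 : Nat.card f.range ≤ Nat.card (commutator G) := by
    apply Subgroup.card_le_of_le
    rintro _ ⟨x, rfl⟩
    exact hG x
  have hp3 : 0 < p ^ 3 := pow_pos hp.pos 3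
  have k4 : Nat.card (commutator G) = p ^ 3 := by
    apply le_antisymm hG'
    have : p ^ 3 * Nat.card (Subgroup.center G) ≤
        Nat.card (commutator G) * Nat.card (Subgroup.center G) := by
      rw [← hcardG, k1, mul_comm]
      exact Nat.mul_le_mul k3 k2'
    exact Nat.le_of_mul_le_mul_right this Nat.card_pos
  have k5 : f.ker = Subgroup.center G := by
    apply Subgroup.eq_of_le_of_card_ge k2
    have : Nat.card (Subgroup.center G) * p ^ 3 ≤ Nat.card f.ker * p ^ 3 := by
      rw [mul_comm, ← hcardG, k1]
      exact Nat.mul_le_mul_left _ (k3.trans hG')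
    exact Nat.le_of_mul_le_mul_right this hp3
  have hr1 : r = 1 := by
    by_contra hne
    let q : G →* Abelianization G := (powMonoidHom p).comp Abelianization.of
    have hq : ∀ x, q x = Abelianization.of (x ^ p) := by intro x; simp [q]
    have q1 := card_eq_ker_mul_range q
    have hof : ∀ x : G, Abelianization.of x = 1 ↔ x ∈ commutator G :=
      fun x => QuotientGroup.eq_one_iff x
    have q2 : Nat.card q.ker ≤ Nat.card (Subgroup.center G) := by
      apply Subgroup.card_le_of_le
      intro x hx
      have h1 : x ^ p ∈ commutator G := by
        rw [← hof, ← hq]; exact hx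
      apply hΩ
      have h2 : (x ^ p) ^ p = 1 := by
        have : commutator G ≤ (c2PowHom hc hodd hcp).ker := by
          rw [commutator_def, Subgroup.commutator_le]
          intro x _ y _
          exact hcp x y
        exact this h1
      obtain ⟨s, rfl⟩ : ∃ s, r = 2 + s := Nat.exists_eq_add_of_le (by omega)
      rw [pow_add, pow_mul, pow_two, pow_mul, h2, one_pow]
    let m : Subgroup.center G →* Abelianization G :=
      Abelianization.of.comp (Subgroup.center G).subtype
    have q3 : Nat.card q.range ≤ Nat.card m.range := by
      apply Subgroup.card_le_of_le
      rintro _ ⟨x, rfl⟩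
      exact ⟨⟨x ^ p, hpz x⟩, (hq x).symm⟩
    have q4 := card_eq_ker_mul_range m
    have q5 : Nat.card m.ker = p ^ 3 := by
      rw [← k4, ← Nat.card_congr (Subgroup.subgroupOfEquivOfLe hle).toEquiv]
      congr 2
      ext x
      exact hof x
    have q6 : Nat.card G ≤ Nat.card (Subgroup.center G) * Nat.card m.range := by
      rw [q1]; exact Nat.mul_le_mul q2 q3
    rw [hcardG, mul_comm] at q6
    have q7 := Nat.le_of_mul_le_mul_left q6 Nat.card_pos
    have q8 : p ^ 6 ≤ Nat.card (Subgroup.center G) := by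
      rw [q4, q5, (by ring : p ^ 6 = p ^ 3 * p ^ 3)]
      exact Nat.mul_le_mul_left _ q7
    have q9 : p ^ 9 ≤ p ^ 7 := by
      calc p ^ 9 = p ^ 3 * p ^ 6 := by ring
        _ ≤ _ := Nat.mul_le_mul_left _ q8
        _ = _ := hcardG.symm
        _ ≤ _ := hcard
    have := (Nat.pow_le_pow_iff_right hp.one_lt).1 q9
    omega
  subst hr1
  rw [pow_one] at *
  refine ⟨hcp, by simpa using hG, fun x => ?_, k4, hcardG, a, b, c, habc⟩
  rw [← k5]
  change _ ↔ x ^ (p ^ 1) = 1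
  rw [pow_one]

end Structure2


open scoped Matrix

section LinAlg
variable {F : Type*} [Field F]

lemma scalar_of_cross (A : Matrix (Fin 3) (Fin 3) F)
    (h : ∀ x : Fin 3 → F, crossProduct x (x ᵥ* A) = 0) : ∃ c : F, A = c • (1 : Matrix _ _ F) := by
  have h0 := h ![1, 0, 0]
  have h1 := h ![0, 1, 0]
  have h2 := h ![0, 0, 1]
  have h01 := h ![1, 1, 0]
  have h02 := h ![1, 0, 1]
  simp [cross_apply, Matrix.vecMul, dotProduct, Fin.sum_univ_three] at h0 h1 h2 h01 h02
  refine ⟨A 0 0, ?_⟩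
  ext i j
  fin_cases i <;> fin_cases j <;> simp <;> grind

lemma exists_isometry (h2 : (2 : F) ≠ 0) (B : Matrix (Fin 3) (Fin 3) F) (hB : B.det ≠ 0) :
    ∃ A : Matrix (Fin 3) (Fin 3) F, A * B = B * A.adjugateᵀ ∧
      ¬ ∃ c : F, A = c • (1 : Matrix _ _ F) := by
  by_cases hs : Bᵀ = B
  · obtain ⟨v, hv⟩ : ∃ v : Fin 3 → F, v ⬝ᵥ (B *ᵥ v) ≠ 0 := by
      by_contra hcon
      push Not at hcon
      have s01 := congrFun (congrFun hs 0) 1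
      have s02 := congrFun (congrFun hs 0) 2
      have s12 := congrFun (congrFun hs 1) 2
      have h0 := hcon ![1, 0, 0]
      have h1 := hcon ![0, 1, 0]
      have h3 := hcon ![0, 0, 1]
      have h01 := hcon ![1, 1, 0]
      have h02 := hcon ![1, 0, 1]
      have h12 := hcon ![0, 1, 1]
      simp [Matrix.mulVec, dotProduct, Fin.sum_univ_three, Matrix.transpose_apply] at *
      have t01 : (2 : F) * B 0 1 = 0 := by grind
      have t02 : (2 : F) * B 0 2 = 0 := by grind
      have t12 : (2 : F) * B 1 2 = 0 := by grind
      simp [h2] at t01 t02 t12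
      apply hB
      rw [Matrix.det_fin_three]
      simp [*]
    set w := B *ᵥ v with hw
    have hw' : v ᵥ* B = w := by rw [hw, ← Matrix.vecMul_transpose, hs]
    set q := v ⬝ᵥ w with hq
    have hq' : w ⬝ᵥ v = q := dotProduct_comm _ _
    set s := 2 / q with hsdef
    have hsq : s * q = 2 := by rw [hsdef]; field_simp
    let A : Matrix (Fin 3) (Fin 3) F := -1 + s • Matrix.vecMulVec w v
    have hAA : A * A = 1 := by
      simp only [A, Matrix.add_mul, Matrix.mul_add, Matrix.smul_mul, Matrix.mul_smul,
        Matrix.vecMulVec_mul_vecMulVec, ← hq]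
      simp only [Matrix.neg_mul, Matrix.mul_neg, Matrix.one_mul, Matrix.mul_one]
      ext i j
      simp [Matrix.vecMulVec_apply]
      linear_combination (s * w i * v j) * hsq
    have hdet : A.det = 1 := by
      have e : v 0 * w 0 + v 1 * w 1 + v 2 * w 2 = q := by
        rw [hq]; simp [dotProduct, Fin.sum_univ_three]
      rw [Matrix.det_fin_three]
      simp [A, Matrix.vecMulVec_apply]
      linear_combination s * e + hsq
    have hadj : A.adjugate = A := by
      calc A.adjugate = A.adjugate * (A * A) := by rw [hAA, mul_one]
        _ = A.adjugate * A * A := by rw [mul_assoc]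
        _ = A := by rw [Matrix.adjugate_mul, hdet]; simp
    refine ⟨A, ?_, ?_⟩
    · rw [hadj]
      simp only [A, Matrix.add_mul, Matrix.transpose_add, Matrix.mul_add, Matrix.transpose_smul,
        Matrix.transpose_neg, Matrix.transpose_one, Matrix.smul_mul, Matrix.mul_smul,
        Matrix.transpose_vecMulVec, Matrix.vecMulVec_mul, Matrix.mul_vecMulVec, hw', ← hw]
      simp
    · rintro ⟨c, hc⟩
      have htr : A.trace = -1 := by
        simp only [A, Matrix.trace_add, Matrix.trace_neg, Matrix.trace_one, Matrix.trace_smul,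
          Matrix.trace_vecMulVec, hq', smul_eq_mul, hsq]
        simp; norm_num
      have c2 : c * c = 1 := by
        have := congrFun (congrFun hAA 0) 0
        rw [hc] at this
        simpa using this
      have c3 : c ^ 3 = 1 := by
        rw [hc] at hdet
        simpa using hdet
      have c1 : c = 1 := by
        calc c = c * (c * c) := by rw [c2, mul_one]
          _ = c ^ 3 := by ring
          _ = 1 := c3
      rw [hc, c1] at htr
      simp at htr
      apply h2
      have : (2 : F) * 2 = 0 := by linear_combination htr
      simpa using this
  · have hu : IsUnit B.det := isUnit_iff_ne_zero.2 hB
    have huT : IsUnit (Bᵀ).det := by rwa [Matrix.det_transpose]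
    let A := B * (Bᵀ)⁻¹
    have hABT : A * Bᵀ = B := by
      simp only [A]; rw [Matrix.mul_assoc, Matrix.nonsing_inv_mul _ huT, Matrix.mul_one]
    have hdet : A.det = 1 := by
      have := congrArg Matrix.det hABT
      rw [Matrix.det_mul, Matrix.det_transpose] at this
      exact mul_right_cancel₀ hB (by rw [this, one_mul])
    have hiso : B * Aᵀ = Bᵀ := by
      rw [← Matrix.transpose_transpose B, ← Matrix.transpose_mul, Matrix.transpose_transpose, hABT]
    refine ⟨A, ?_, ?_⟩
    · have h3 : Aᵀ * A.adjugateᵀ = 1 := by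
        rw [← Matrix.transpose_mul, Matrix.adjugate_mul, hdet]; simp
      calc A * B = A * (B * (Aᵀ * A.adjugateᵀ)) := by rw [h3, Matrix.mul_one]
        _ = A * (B * Aᵀ) * A.adjugateᵀ := by simp only [Matrix.mul_assoc]
        _ = B * A.adjugateᵀ := by rw [hiso, hABT]
    · rintro ⟨c, hc⟩
      apply hs
      have c3 : c ^ 3 = 1 := by
        rw [hc] at hdet
        simpa using hdet
      have e1 : c • Bᵀ = B := by rw [hc] at hABT; simpa using hABT
      have e2 : c • B = Bᵀ := by rw [hc] at hiso; simpa using hiso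
      have c2 : c * c = 1 := by
        have h4 : (c * c) • B = B := by rw [mul_smul, e2, e1]
        by_contra hne
        have h5 : (c * c - 1) • B = 0 := by rw [sub_smul, h4, one_smul, sub_self]
        rcases smul_eq_zero.1 h5 with h6 | h6
        · exact hne (sub_eq_zero.1 h6)
        · apply hB; rw [h6]; simp
      have c1 : c = 1 := by
        calc c = c * (c * c) := by rw [c2, mul_one]
          _ = c ^ 3 := by ring
          _ = 1 := c3
      rw [c1, one_smul] at e1
      exact e1

end LinAlg


open scoped commutatorElement Matrix

section Abstract
variable {G : Type*} [Group G] {p : ℕ} [Fact p.Prime] {W : Type*} [AddCommGroup W]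
  [Module (ZMod p) W]

def tripleProd (a b c : G) (x : Fin 3 → ZMod p) : G :=
  a ^ (x 0).val * b ^ (x 1).val * c ^ (x 2).val

lemma add_map_pow (f : G → W) (hf : ∀ x y, f (x * y) = f x + f y) (x : G) (n : ℕ) :
    f (x ^ n) = (n : ZMod p) • f x := by
  induction n with
  | zero =>
    have := hf 1 1
    simp at this
    simp [this]
  | succ n ih => rw [pow_succ, hf, ih]; push_cast; rw [add_smul, one_smul]

lemma add_map_triple (f : G → W) (hf : ∀ x y, f (x * y) = f x + f y) (a b c : G)
    (x : Fin 3 → ZMod p) :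
    f (tripleProd a b c x) = x 0 • f a + x 1 • f b + x 2 • f c := by
  unfold tripleProd
  rw [hf, hf, add_map_pow (p := p) f hf, add_map_pow (p := p) f hf, add_map_pow (p := p) f hf]
  simp

lemma bilin_triple (K : G → G → W) (hl : ∀ x y z, K (x * y) z = K x z + K y z)
    (hr : ∀ x y z, K x (y * z) = K x y + K x z) (hK : ∀ x, K x x = 0)
    (a b c : G) (x y : Fin 3 → ZMod p) :
    K (tripleProd a b c x) (tripleProd a b c y) =
      (x 1 * y 2 - x 2 * y 1) • K b c + (x 2 * y 0 - x 0 * y 2) • K c a +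
      (x 0 * y 1 - x 1 * y 0) • K a b := by
  have hs : ∀ x y, K y x = - K x y := by
    intro x y
    have := hK (x * y)
    rw [hl, hr, hr, hK, hK] at this
    simp at this
    exact eq_neg_of_add_eq_zero_right this
  rw [add_map_triple (fun t => K t (tripleProd a b c y)) (fun _ _ => hl _ _ _)]
  rw [add_map_triple (fun t => K a t) (fun _ _ => hr _ _ _),
    add_map_triple (fun t => K b t) (fun _ _ => hr _ _ _),
    add_map_triple (fun t => K c t) (fun _ _ => hr _ _ _)]
  rw [hK, hK, hK, hs a b, hs c a, hs b c]
  module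

lemma abstract_main (h2 : (2 : ZMod p) ≠ 0) (K : G → G → W) (P : G → W)
    (hl : ∀ x y z, K (x * y) z = K x z + K y z)
    (hr : ∀ x y z, K x (y * z) = K x y + K x z) (hK : ∀ x, K x x = 0)
    (hP : ∀ x y, P (x * y) = P x + P y) (hPK : ∀ x, P x = 0 → ∀ y, K x y = 0)
    (a b c : G)
    (hT : ∀ x : Fin 3 → ZMod p, x 0 • K b c + x 1 • K c a + x 2 • K a b = 0 → x = 0)
    (hS : ∀ g, ∃ x : Fin 3 → ZMod p, P g = x 0 • K b c + x 1 • K c a + x 2 • K a b) :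
    ∃ (a' b' c' : G) (x y z : Fin 3 → ZMod p),
      (P a = x 0 • K b c + x 1 • K c a + x 2 • K a b ∧
       P b = y 0 • K b c + y 1 • K c a + y 2 • K a b ∧
       P c = z 0 • K b c + z 1 • K c a + z 2 • K a b) ∧
      (P a' = x 0 • K b' c' + x 1 • K c' a' + x 2 • K a' b' ∧
       P b' = y 0 • K b' c' + y 1 • K c' a' + y 2 • K a' b' ∧
       P c' = z 0 • K b' c' + z 1 • K c' a' + z 2 • K a' b') ∧
      ∃ v : Fin 3 → ZMod p, K (tripleProd a b c v) (tripleProd a' b' c' v) ≠ 0 := by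
  obtain ⟨x, hx⟩ := hS a
  obtain ⟨y, hy⟩ := hS b
  obtain ⟨z, hz⟩ := hS c
  let B : Matrix (Fin 3) (Fin 3) (ZMod p) := Matrix.of ![x, y, z]
  have hPQ : ∀ v : Fin 3 → ZMod p, P (tripleProd a b c v) =
      (v ᵥ* B) 0 • K b c + (v ᵥ* B) 1 • K c a + (v ᵥ* B) 2 • K a b := by
    intro v
    rw [add_map_triple P hP, hx, hy, hz]
    simp only [Matrix.vecMul, dotProduct, Fin.sum_univ_three, B, Matrix.of_apply,
      Matrix.cons_val]
    module
  have hB : B.det ≠ 0 := by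
    intro h0
    obtain ⟨v, hv, hv0⟩ := Matrix.exists_vecMul_eq_zero_iff.2 h0
    apply hv
    have h1 : P (tripleProd a b c v) = 0 := by rw [hPQ, hv0]; simp
    have h3 := hPK _ h1
    have h4 := fun w => hT ![_, _, _] ((bilin_triple K hl hr hK a b c v w).symm.trans (h3 _))
    have h5 := h4 ![1, 0, 0]
    have h6 := h4 ![0, 1, 0]
    simp at h5 h6
    ext i
    fin_cases i <;> simp <;> grind
  obtain ⟨A, hAB, hA⟩ := exists_isometry h2 B hB
  refine ⟨tripleProd a b c (A 0), tripleProd a b c (A 1), tripleProd a b c (A 2), x, y, z,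
    ⟨hx, hy, hz⟩, ?_, ?_⟩
  · have key : ∀ i : Fin 3, P (tripleProd a b c (A i)) =
        B i 0 • K (tripleProd a b c (A 1)) (tripleProd a b c (A 2)) +
        B i 1 • K (tripleProd a b c (A 2)) (tripleProd a b c (A 0)) +
        B i 2 • K (tripleProd a b c (A 0)) (tripleProd a b c (A 1)) := by
      intro i
      have h3 : A i ᵥ* B = (B * A.adjugateᵀ) i := by
        rw [← hAB]; rfl
      rw [hPQ, h3]
      simp only [bilin_triple K hl hr hK]
      simp only [Matrix.mul_apply, Fin.sum_univ_three, Matrix.transpose_apply,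
        Matrix.adjugate_fin_three, Matrix.of_apply, Matrix.cons_val]
      module
    exact ⟨key 0, key 1, key 2⟩
  · by_contra hcon
    push Not at hcon
    apply hA
    apply scalar_of_cross
    intro v
    have h1 := hcon v
    rw [add_map_triple (fun t => K (tripleProd a b c v) t) (fun _ _ => hr _ _ _)] at h1
    simp only [bilin_triple K hl hr hK] at h1
    apply hT
    rw [← h1]
    simp only [Matrix.vecMul, dotProduct, Fin.sum_univ_three, crossProduct,
      LinearMap.mk₂_apply, Matrix.cons_val]
    module

end Abstract


open scoped commutatorElement

section Graph
variable {G : Type*} [Group G]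

lemma endo_of_graph [Finite G] (S : Subgroup (G × G)) (hcard : Nat.card S ≤ Nat.card G)
    (hS : S.map (MonoidHom.fst G G) = ⊤) :
    ∃ φ : G →* G, ∀ s ∈ S, φ s.1 = s.2 := by
  let f : S →* G := (MonoidHom.fst G G).comp S.subtype
  have hf : Function.Surjective f := by
    intro g
    have : g ∈ S.map (MonoidHom.fst G G) := by rw [hS]; trivial
    obtain ⟨s, hs, rfl⟩ := this
    exact ⟨⟨s, hs⟩, rfl⟩
  have hb : Function.Bijective f :=
    hf.bijective_of_nat_card_le hcard
  let e := MulEquiv.ofBijective f hb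
  refine ⟨((MonoidHom.snd G G).comp S.subtype).comp e.symm.toMonoidHom, fun s hs => ?_⟩
  have h1 : e.symm s.1 = ⟨s, hs⟩ := by
    rw [MulEquiv.symm_apply_eq]; rfl
  simp [h1]

lemma exists_center_gen [Finite G] {p : ℕ} (hp : p.Prime) (hpG : IsPGroup p G)
    (hcard : Nat.card G ≤ p ^ 7) (hle : commutator G ≤ Subgroup.center G)
    (hz : ∀ x ∈ Subgroup.center G, x ^ p = 1)
    (hcomm : Nat.card (commutator G) = p ^ 3)
    (hcG : Nat.card G = p ^ 3 * Nat.card (Subgroup.center G)) :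
    ∃ z ∈ Subgroup.center G, Subgroup.center G ≤ commutator G ⊔ Subgroup.zpowers z ∧
      p ^ 6 * orderOf z ≤ Nat.card G := by
  have hp0 : 0 < p := hp.pos
  rcases hle.eq_or_lt with h | h
  · refine ⟨1, one_mem _, by simp [h], ?_⟩
    rw [hcG, ← h, hcomm]
    simp [← pow_add]
  · obtain ⟨z, hzc, hzn⟩ := SetLike.exists_of_lt h
    have hlt : commutator G < commutator G ⊔ Subgroup.zpowers z := by
      refine lt_of_le_of_ne le_sup_left fun he => hzn ?_
      rw [he]
      exact Subgroup.mem_sup_right (Subgroup.mem_zpowers z)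
    have h1 := mul_card_le_of_lt hp hpG hlt
    have hle2 : commutator G ⊔ Subgroup.zpowers z ≤ Subgroup.center G :=
      sup_le hle (by simpa using hzc)
    have h2 : Nat.card (Subgroup.center G) ≤ p ^ 4 := by
      have : p ^ 3 * Nat.card (Subgroup.center G) ≤ p ^ 3 * p ^ 4 := by
        rw [← hcG, ← pow_add]; exact hcard
      exact Nat.le_of_mul_le_mul_left this (by positivity)
    have h3 : p ^ 4 ≤ Nat.card (commutator G ⊔ Subgroup.zpowers z : Subgroup G) := by
      rw [hcomm] at h1
      calc p ^ 4 = p * p ^ 3 := by ring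
        _ ≤ _ := h1
    have h4 := Subgroup.eq_of_le_of_card_ge hle2 (h2.trans h3)
    refine ⟨z, hzc, h4.ge, ?_⟩
    have h5 : orderOf z ≤ p := Nat.le_of_dvd hp0 (orderOf_dvd_of_pow_eq_one (hz z hzc))
    rw [hcG, ← h4]
    calc p ^ 6 * orderOf z ≤ p ^ 6 * p := by gcongr
      _ = p ^ 3 * p ^ 4 := by ring
      _ ≤ _ := by gcongr

lemma card_graph_le [Finite G] (hc : ∀ x y z : G, Commute z ⁅x, y⁆) {p : ℕ} (hp : 0 < p)
    (a b c z : G) (hz : z ∈ Subgroup.center G) (h1 : ∀ x y : G, ⁅x, y⁆ ^ p = 1)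
    (V : Subgroup G) (hV : V = Subgroup.zpowers z ⊔ Subgroup.zpowers ⁅b, c⁆ ⊔
      Subgroup.zpowers ⁅c, a⁆ ⊔ Subgroup.zpowers ⁅a, b⁆)
    (ha : a ^ p ∈ V) (hb : b ^ p ∈ V) (hc' : c ^ p ∈ V) :
    Nat.card (V ⊔ Subgroup.zpowers a ⊔ Subgroup.zpowers b ⊔ Subgroup.zpowers c : Subgroup G) ≤
      p ^ 6 * orderOf z := by
  have hcen : ∀ x y : G, ⁅x, y⁆ ∈ Subgroup.center G := fun x y =>
    Subgroup.mem_center_iff.2 fun g => (hc x y g).eq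
  have step1 : ∀ (H : Subgroup G) (x y : G),
      Nat.card (H ⊔ Subgroup.zpowers ⁅x, y⁆ : Subgroup G) ≤ p * Nat.card H := by
    intro H x y
    apply card_sup_zpowers_le hp
    · intro h hh
      rw [← (hc x y h).eq, mul_inv_cancel_right]; exact hh
    · rw [h1]; exact one_mem _
  have hVcard : Nat.card V ≤ p ^ 3 * orderOf z := by
    rw [hV]
    calc _ ≤ p * (p * (p * Nat.card (Subgroup.zpowers z))) := by
            refine (step1 _ _ _).trans (Nat.mul_le_mul_left _ ?_)
            refine (step1 _ _ _).trans (Nat.mul_le_mul_left _ ?_)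
            exact step1 _ _ _
      _ = _ := by rw [Nat.card_zpowers]; ring
  have hbc : ⁅b, c⁆ ∈ V := by
    rw [hV]
    exact Subgroup.mem_sup_left (Subgroup.mem_sup_left
      (Subgroup.mem_sup_right (Subgroup.mem_zpowers _)))
  have hca : ⁅c, a⁆ ∈ V := by
    rw [hV]; exact Subgroup.mem_sup_left (Subgroup.mem_sup_right (Subgroup.mem_zpowers _))
  have hab : ⁅a, b⁆ ∈ V := by
    rw [hV]; exact Subgroup.mem_sup_right (Subgroup.mem_zpowers _)
  have hVc : V ≤ Subgroup.center G := by
    rw [hV]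
    simp only [sup_le_iff, Subgroup.zpowers_le]
    exact ⟨⟨⟨hz, hcen _ _⟩, hcen _ _⟩, hcen _ _⟩
  -- conjugation closure
  have conjV : ∀ g h : G, h ∈ V → g * h * g⁻¹ = h := by
    intro g h hh
    rw [Subgroup.mem_center_iff.1 (hVc hh) g, mul_inv_cancel_right]
  have conjx : ∀ (H : Subgroup G) (g x : G), ⁅g, x⁆ ∈ H → x ∈ H → g * x * g⁻¹ ∈ H := by
    intro H g x h1 h2
    have : g * x * g⁻¹ = ⁅g, x⁆ * x := by simp [commutatorElement_def]
    rw [this]; exact mul_mem h1 h2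
  have step2 : ∀ (H : Subgroup G) (g x : G), (∀ h ∈ H, g * h * g⁻¹ ∈ H) → ⁅g, x⁆ ∈ H →
      ∀ h ∈ H ⊔ Subgroup.zpowers x, g * h * g⁻¹ ∈ H ⊔ Subgroup.zpowers x := by
    intro H g x hH hx
    have : H ⊔ Subgroup.zpowers x ≤
        (H ⊔ Subgroup.zpowers x).comap (MulAut.conj g).toMonoidHom := by
      refine sup_le (fun h hh => Subgroup.mem_sup_left (hH h hh)) ?_
      rw [Subgroup.zpowers_le]
      exact conjx _ g x (Subgroup.mem_sup_left hx)
        (Subgroup.mem_sup_right (Subgroup.mem_zpowers x))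
    exact fun h hh => this hh
  have hba : ⁅b, a⁆ ∈ V := by
    have := inv_mem hab
    rwa [commutatorElement_inv] at this
  have hcb : ⁅c, b⁆ ∈ V := by
    have := inv_mem hbc
    rwa [commutatorElement_inv] at this
  have hVn : ∀ g : G, ∀ h ∈ V, g * h * g⁻¹ ∈ V := fun g h hh => by rwa [conjV g h hh]
  calc _ ≤ p * (p * (p * Nat.card V)) := by
        refine (card_sup_zpowers_le hp _ _ ?_ ?_).trans (Nat.mul_le_mul_left _ ?_)
        · exact step2 _ _ _ (step2 _ _ _ (hVn _) hca) (Subgroup.mem_sup_left hcb)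
        · exact Subgroup.mem_sup_left (Subgroup.mem_sup_left hc')
        refine (card_sup_zpowers_le hp _ _ ?_ ?_).trans (Nat.mul_le_mul_left _ ?_)
        · exact step2 _ _ _ (hVn _) hba
        · exact Subgroup.mem_sup_left hb
        exact card_sup_zpowers_le hp _ _ (hVn _) ha
    _ ≤ p * (p * (p * (p ^ 3 * orderOf z))) := by gcongr
    _ = _ := by ring

end Graph


open scoped commutatorElement Matrix

section Final
variable {G : Type*} [Group G]

lemma exists_data [Finite G] (hc : ∀ x y z : G, Commute z ⁅x, y⁆) {p : ℕ} (hp : p.Prime)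
    (hodd : Odd p) (h1 : ∀ x y : G, ⁅x, y⁆ ^ p = 1) (hG : ∀ x : G, x ^ p ∈ commutator G)
    (hΩ : ∀ x : G, x ^ p = 1 ↔ x ∈ Subgroup.center G)
    (hcomm : Nat.card (commutator G) = p ^ 3) (a b c : G)
    (habc : Subgroup.closure ({a, b, c} ∪ (Subgroup.center G : Set G)) = ⊤) :
    ∃ (a' b' c' : G) (x y z : Fin 3 → ℕ),
      (a ^ p = ⁅b, c⁆ ^ x 0 * ⁅c, a⁆ ^ x 1 * ⁅a, b⁆ ^ x 2 ∧
       b ^ p = ⁅b, c⁆ ^ y 0 * ⁅c, a⁆ ^ y 1 * ⁅a, b⁆ ^ y 2 ∧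
       c ^ p = ⁅b, c⁆ ^ z 0 * ⁅c, a⁆ ^ z 1 * ⁅a, b⁆ ^ z 2) ∧
      (a' ^ p = ⁅b', c'⁆ ^ x 0 * ⁅c', a'⁆ ^ x 1 * ⁅a', b'⁆ ^ x 2 ∧
       b' ^ p = ⁅b', c'⁆ ^ y 0 * ⁅c', a'⁆ ^ y 1 * ⁅a', b'⁆ ^ y 2 ∧
       c' ^ p = ⁅b', c'⁆ ^ z 0 * ⁅c', a'⁆ ^ z 1 * ⁅a', b'⁆ ^ z 2) ∧
      ∃ k l m : ℕ, ⁅a ^ k * b ^ l * c ^ m, a' ^ k * b' ^ l * c' ^ m⁆ ≠ 1 := by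
  have : Fact p.Prime := ⟨hp⟩
  have hcen : ∀ x y : G, ⁅x, y⁆ ∈ Subgroup.center G := fun x y =>
    Subgroup.mem_center_iff.2 fun g => (hc x y g).eq
  have hle : commutator G ≤ Subgroup.center G := by
    rw [commutator_def, Subgroup.commutator_le]
    exact fun x _ y _ => hcen x y
  let : CommGroup (Subgroup.center G) :=
    { (inferInstance : Group (Subgroup.center G)) with
      mul_comm := fun s t => Subtype.ext (Subgroup.mem_center_iff.1 t.2 s.1) }
  let : Module (ZMod p) (Additive (Subgroup.center G)) := AddCommGroup.zmodModule (by
    intro w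
    apply Additive.toMul.injective
    apply Subtype.ext
    exact (hΩ _).2 w.toMul.2)
  let ι : Additive (Subgroup.center G) → G := fun w => (w.toMul : G)
  have ιinj : Function.Injective ι := fun v w h => Additive.toMul.injective (Subtype.ext h)
  have ιadd : ∀ v w, ι (v + w) = ι v * ι w := fun _ _ => rfl
  have ιsmul : ∀ (t : ZMod p) w, ι (t • w) = ι w ^ t.val := by
    intro t w
    have : t • w = t.val • w := by
      rw [← Nat.cast_smul_eq_nsmul (ZMod p), ZMod.natCast_zmod_val]
    rw [this]; rfl
  let K : G → G → Additive (Subgroup.center G) := fun x y => Additive.ofMul ⟨⁅x, y⁆, hcen x y⟩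
  let P : G → Additive (Subgroup.center G) := fun x => Additive.ofMul ⟨x ^ p, hle (hG x)⟩
  have ιK : ∀ x y, ι (K x y) = ⁅x, y⁆ := fun _ _ => rfl
  have ιP : ∀ x, ι (P x) = x ^ p := fun _ => rfl
  have ι0 : ι 0 = 1 := rfl
  have h2 : (2 : ZMod p) ≠ 0 := by
    intro h
    have : (p : ℕ) ∣ 2 := by
      rw [← CharP.cast_eq_zero_iff (ZMod p) p 2]; exact_mod_cast h
    have h3 := (Nat.prime_dvd_prime_iff_eq hp Nat.prime_two).1 this
    subst h3
    exact absurd hodd (by decide)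
  -- the linear map T
  let T : Multiplicative (Fin 3 → ZMod p) →* G :=
    { toFun := fun x => ι (x.toAdd 0 • K b c + x.toAdd 1 • K c a + x.toAdd 2 • K a b)
      map_one' := by simp [ι0]
      map_mul' := by
        intro x y
        rw [← ιadd]
        congr 1
        simp only [toAdd_mul, Pi.add_apply]
        module }
  have Tdef : ∀ x : Fin 3 → ZMod p, T (Multiplicative.ofAdd x) =
      ι (x 0 • K b c + x 1 • K c a + x 2 • K a b) := fun _ => rfl
  have hr : commutator G ≤ T.range := by
    apply commutator_le_of_gen hc _ habc
    have e0 : ⁅b, c⁆ ∈ T.range := ⟨Multiplicative.ofAdd ![1, 0, 0], by rw [Tdef]; simp [ιK]⟩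
    have e1 : ⁅c, a⁆ ∈ T.range := ⟨Multiplicative.ofAdd ![0, 1, 0], by rw [Tdef]; simp [ιK]⟩
    have e2 : ⁅a, b⁆ ∈ T.range := ⟨Multiplicative.ofAdd ![0, 0, 1], by rw [Tdef]; simp [ιK]⟩
    have e0' : ⁅c, b⁆ ∈ T.range := by rw [← commutatorElement_inv b c]; exact inv_mem e0
    have e1' : ⁅a, c⁆ ∈ T.range := by rw [← commutatorElement_inv c a]; exact inv_mem e1
    have e2' : ⁅b, a⁆ ∈ T.range := by rw [← commutatorElement_inv a b]; exact inv_mem e2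
    have e3 : ∀ x : G, ⁅x, x⁆ ∈ T.range := fun x => by
      rw [commutatorElement_self]; exact one_mem _
    rintro x (hx | hx | hx) y (hy | hy | hy) <;> rw [hx, hy] <;>
      first | exact e3 _ | assumption
  have hTinj : Function.Injective T := by
    have hs : Function.Surjective T.rangeRestrict := T.rangeRestrict_surjective
    have hcd : Nat.card (Multiplicative (Fin 3 → ZMod p)) ≤ Nat.card T.range := by
      have e : Nat.card (Multiplicative (Fin 3 → ZMod p)) = p ^ 3 := by
        have : Nat.card (Fin 3 → ZMod p) = p ^ 3 := by simp
        exact this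
      rw [e, ← hcomm]
      exact Nat.card_le_card_of_injective _ (Subgroup.inclusion_injective hr)
    exact (MonoidHom.rangeRestrict_injective_iff).1 (hs.bijective_of_nat_card_le hcd).1
  obtain ⟨a', b', c', x, y, z, ⟨hx, hy, hz⟩, ⟨hx', hy', hz'⟩, v, hv⟩ :=
    abstract_main h2 K P
      (fun x y z => ιinj (c2_mul_left hc x y z))
      (fun x y z => ιinj (c2_mul_right hc x y z))
      (fun x => ιinj (commutatorElement_self x))
      (fun x y => ιinj (c2_mul_pow_of_odd hc hodd x y (h1 _ _)))
      (fun x hx y => ιinj (by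
        have : x ∈ Subgroup.center G := (hΩ x).1 (congrArg ι hx)
        exact commutatorElement_eq_one_iff_commute.2 (Subgroup.mem_center_iff.1 this y).symm))
      a b c
      (fun x hx => by
        have : T (Multiplicative.ofAdd x) = T 1 := by rw [Tdef, hx, map_one]; rfl
        exact hTinj this)
      (fun g => by
        obtain ⟨t, ht⟩ := hr (hG g)
        exact ⟨t.toAdd, ιinj ht.symm⟩)
  have tr : ∀ (g a b c : G) (x : Fin 3 → ZMod p),
      P g = x 0 • K b c + x 1 • K c a + x 2 • K a b →
      g ^ p = ⁅b, c⁆ ^ (x 0).val * ⁅c, a⁆ ^ (x 1).val * ⁅a, b⁆ ^ (x 2).val := by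
    intro g a b c x h
    rw [← ιP, h, ιadd, ιadd, ιsmul, ιsmul, ιsmul, ιK, ιK, ιK]
  refine ⟨a', b', c', fun i => (x i).val, fun i => (y i).val, fun i => (z i).val,
    ⟨tr _ _ _ _ _ hx, tr _ _ _ _ _ hy, tr _ _ _ _ _ hz⟩,
    ⟨tr _ _ _ _ _ hx', tr _ _ _ _ _ hy', tr _ _ _ _ _ hz'⟩, (v 0).val, (v 1).val, (v 2).val, ?_⟩
  intro h
  exact hv (ιinj h)

lemma exists_bad_endo [Finite G] (hc : ∀ x y z : G, Commute z ⁅x, y⁆) {p : ℕ} (hp : p.Prime)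
    (hodd : Odd p) (hpG : IsPGroup p G) (hcard : Nat.card G ≤ p ^ 7)
    (h1 : ∀ x y : G, ⁅x, y⁆ ^ p = 1) (hG : ∀ x : G, x ^ p ∈ commutator G)
    (hΩ : ∀ x : G, x ^ p = 1 ↔ x ∈ Subgroup.center G)
    (hcomm : Nat.card (commutator G) = p ^ 3)
    (hcG : Nat.card G = p ^ 3 * Nat.card (Subgroup.center G)) (a b c : G)
    (habc : Subgroup.closure ({a, b, c} ∪ (Subgroup.center G : Set G)) = ⊤) :
    ∃ (φ : G →* G) (x : G), x * φ x ≠ φ x * x := by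
  have hle : commutator G ≤ Subgroup.center G := by
    rw [commutator_def, Subgroup.commutator_le]
    exact fun x _ y _ => Subgroup.mem_center_iff.2 fun g => (hc x y g).eq
  obtain ⟨a', b', c', x, y, z, ⟨hx, hy, hz⟩, ⟨hx', hy', hz'⟩, k, l, m, hne⟩ :=
    exists_data hc hp hodd h1 hG hΩ hcomm a b c habc
  obtain ⟨w, hw, hwg, hwc⟩ := exists_center_gen hp hpG hcard hle (fun x hx => (hΩ x).2 hx)
    hcomm hcG
  have hcomp : ∀ s t : G × G, ⁅s, t⁆ = (⁅s.1, t.1⁆, ⁅s.2, t.2⁆) := fun _ _ => rfl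
  set α : G × G := (a, a') with hα
  set β : G × G := (b, b') with hβ
  set γ : G × G := (c, c') with hγ
  set ζ : G × G := (w, 1) with hζ
  obtain ⟨V, hV⟩ : ∃ V : Subgroup (G × G), V = Subgroup.zpowers ζ ⊔ Subgroup.zpowers ⁅β, γ⁆ ⊔
      Subgroup.zpowers ⁅γ, α⁆ ⊔ Subgroup.zpowers ⁅α, β⁆ := ⟨_, rfl⟩
  have hζV : ζ ∈ V := by
    rw [hV]
    exact Subgroup.mem_sup_left (Subgroup.mem_sup_left
      (Subgroup.mem_sup_left (Subgroup.mem_zpowers _)))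
  have hbc : ⁅β, γ⁆ ∈ V := by
    rw [hV]
    exact Subgroup.mem_sup_left (Subgroup.mem_sup_left
      (Subgroup.mem_sup_right (Subgroup.mem_zpowers _)))
  have hca : ⁅γ, α⁆ ∈ V := by
    rw [hV]; exact Subgroup.mem_sup_left (Subgroup.mem_sup_right (Subgroup.mem_zpowers _))
  have hab : ⁅α, β⁆ ∈ V := by
    rw [hV]; exact Subgroup.mem_sup_right (Subgroup.mem_zpowers _)
  have hprod : ∀ i j k : ℕ, ⁅β, γ⁆ ^ i * ⁅γ, α⁆ ^ j * ⁅α, β⁆ ^ k ∈ V := fun i j k =>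
    mul_mem (mul_mem (pow_mem hbc _) (pow_mem hca _)) (pow_mem hab _)
  have hαp : α ^ p ∈ V := by
    have : α ^ p = ⁅β, γ⁆ ^ x 0 * ⁅γ, α⁆ ^ x 1 * ⁅α, β⁆ ^ x 2 := Prod.ext hx hx'
    rw [this]; exact hprod _ _ _
  have hβp : β ^ p ∈ V := by
    have : β ^ p = ⁅β, γ⁆ ^ y 0 * ⁅γ, α⁆ ^ y 1 * ⁅α, β⁆ ^ y 2 := Prod.ext hy hy'
    rw [this]; exact hprod _ _ _
  have hγp : γ ^ p ∈ V := by
    have : γ ^ p = ⁅β, γ⁆ ^ z 0 * ⁅γ, α⁆ ^ z 1 * ⁅α, β⁆ ^ z 2 := Prod.ext hz hz'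
    rw [this]; exact hprod _ _ _
  have hζc : ζ ∈ Subgroup.center (G × G) := by
    rw [Subgroup.mem_center_iff]
    intro g
    exact Prod.ext (Subgroup.mem_center_iff.1 hw g.1) (by simp [hζ])
  have hcard' := card_graph_le (G := G × G)
    (fun s t u => Prod.ext (hc s.1 t.1 u.1) (hc s.2 t.2 u.2)) hp.pos α β γ ζ hζc
    (fun s t => Prod.ext (h1 s.1 t.1) (h1 s.2 t.2)) V hV hαp hβp hγp
  set S := V ⊔ Subgroup.zpowers α ⊔ Subgroup.zpowers β ⊔ Subgroup.zpowers γ with hS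
  have hVS : V ≤ S := le_sup_left.trans (le_sup_left.trans le_sup_left)
  have hαS : α ∈ S := Subgroup.mem_sup_left (Subgroup.mem_sup_left
    (Subgroup.mem_sup_right (Subgroup.mem_zpowers _)))
  have hβS : β ∈ S := Subgroup.mem_sup_left (Subgroup.mem_sup_right (Subgroup.mem_zpowers _))
  have hγS : γ ∈ S := Subgroup.mem_sup_right (Subgroup.mem_zpowers _)
  have hord : orderOf ζ = orderOf w := by simp [hζ, Prod.orderOf]
  rw [hord] at hcard'
  have hsurj : S.map (MonoidHom.fst G G) = ⊤ := by
    have ea : a ∈ S.map (MonoidHom.fst G G) := ⟨α, hαS, rfl⟩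
    have eb : b ∈ S.map (MonoidHom.fst G G) := ⟨β, hβS, rfl⟩
    have ec : c ∈ S.map (MonoidHom.fst G G) := ⟨γ, hγS, rfl⟩
    have ew : w ∈ S.map (MonoidHom.fst G G) := ⟨ζ, hVS hζV, rfl⟩
    have hcm : ∀ x ∈ S.map (MonoidHom.fst G G), ∀ y ∈ S.map (MonoidHom.fst G G),
        ⁅x, y⁆ ∈ S.map (MonoidHom.fst G G) := by
      intro x hx y hy
      rw [commutatorElement_def]
      exact mul_mem (mul_mem (mul_mem hx hy) (inv_mem hx)) (inv_mem hy)
    have hmem : ∀ x ∈ ({a, b, c} : Set G), x ∈ S.map (MonoidHom.fst G G) := by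
      rintro x (h | h | h) <;> rw [h] <;> assumption
    have hG' : commutator G ≤ S.map (MonoidHom.fst G G) :=
      commutator_le_of_gen hc _ habc _ (fun x hx y hy => hcm x (hmem x hx) y (hmem y hy))
    rw [eq_top_iff, ← habc, Subgroup.closure_le]
    rintro x (hx | hx)
    · exact hmem x hx
    · have : commutator G ⊔ Subgroup.zpowers w ≤ S.map (MonoidHom.fst G G) :=
        sup_le hG' (by rwa [Subgroup.zpowers_le])
      exact this (hwg hx)
  obtain ⟨φ, hφ⟩ := endo_of_graph S (hcard'.trans hwc) hsurj
  refine ⟨φ, a ^ k * b ^ l * c ^ m, fun h => hne ?_⟩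
  have ha := hφ _ hαS
  have hb := hφ _ hβS
  have hc0 := hφ _ hγS
  simp only [hα, hβ, hγ] at ha hb hc0
  rw [map_mul, map_mul, map_pow, map_pow, map_pow, ha, hb, hc0] at h
  exact commutatorElement_eq_one_iff_mul_comm.2 h

end Final

/-- For every odd prime `p`, every finite `p`-group that is an `E`-group and
has order at most `p ^ 7` is abelian. -/
theorem pEGroup_card_le_p_pow_seven_comm
    (p : ℕ) (hp : p.Prime) (hodd : Odd p) {G : Type*} [Group G] [Finite G]
    (hpG : IsPGroup p G) (hE : IsEGroup G) (hcard : Nat.card G ≤ p ^ 7) :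
    ∀ x y : G, x * y = y * x := by
  by_contra hna
  have hle : commutator G ≤ Subgroup.center G := class_two' hp hpG hE hcard
  have hc : ∀ x y z : G, Commute z ⁅x, y⁆ := fun x y z =>
    Subgroup.mem_center_iff.1 (hle (Subgroup.commutator_mem_commutator
      (Subgroup.mem_top x) (Subgroup.mem_top y))) z
  obtain ⟨r, hr, hG, hΩ⟩ := omega_central hp hpG hE
  have h : ∀ x y : G, ⁅x, y⁆ ^ (p ^ r) = 1 := by
    intro x y
    rw [← c2_pow_right hc]
    exact commutatorElement_eq_one_iff_commute.2 (Subgroup.mem_center_iff.1 (hle (hG y)) x)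
  obtain ⟨h1, h2, h3, h4, h5, a, b, c, habc⟩ :=
    structure_two hc hp hodd hpG hcard hr h hG hΩ hna
  obtain ⟨φ, x, hx⟩ := exists_bad_endo hc hp hodd hpG hcard h1 h2 h3 h4 h5 a b c habc
  exact hx (hE φ x)
end

section
/- There exists a non-abelian finite group of order 2^7 = 128 that is an E-group. -/
namespace E128

/-- Table of a bilinear map `F₂⁴ × F₂⁴ → F₂³` (vectors encoded in binary, three bits per entry).
On basis vectors, `f eᵢ eᵢ = 3, 3, 3, 7`, and for `i < j` the values are
`f₁₂ = 3, f₁₃ = 5, f₁₄ = 5, f₂₃ = 7, f₂₄ = 6, f₃₄ = 2`; the others vanish. -/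
def f (u v : Fin 16) : Fin 8 :=
  ⟨(961124700721684378298118569778952253852189928718189469760904547515136912185423757185530548314329535304047931373737980684608916718169226974398019487474272718670545944142897695796751091596623896031649095376238670727892003387296710656 >>> (3 * (16 * u.val + v.val))) % 8, Nat.mod_lt _ (by decide)⟩

set_option maxRecDepth 100000
set_option maxHeartbeats 4000000

theorem x16_assoc : ∀ a b c : Fin 16, (a ^^^ b) ^^^ c = a ^^^ (b ^^^ c) := by decide +kernel
theorem x8_assoc : ∀ a b c : Fin 8, (a ^^^ b) ^^^ c = a ^^^ (b ^^^ c) := by decide +kernel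
theorem x8_comm : ∀ a b : Fin 8, a ^^^ b = b ^^^ a := by decide +kernel
theorem x8_self : ∀ a : Fin 8, a ^^^ a = 0 := by decide +kernel
theorem x16_self : ∀ a : Fin 16, a ^^^ a = 0 := by decide +kernel
theorem x8_zero : ∀ a : Fin 8, 0 ^^^ a = a := by decide +kernel
theorem x8_zero' : ∀ a : Fin 8, a ^^^ 0 = a := by decide +kernel
theorem x16_zero : ∀ a : Fin 16, 0 ^^^ a = a := by decide +kernel
theorem x16_zero' : ∀ a : Fin 16, a ^^^ 0 = a := by decide +kernel
theorem x16_comm : ∀ a b : Fin 16, a ^^^ b = b ^^^ a := by decide +kernel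
theorem f_left : ∀ a b c : Fin 16, f (a ^^^ b) c = f a c ^^^ f b c := by decide +kernel
theorem f_right : ∀ a b c : Fin 16, f a (b ^^^ c) = f a b ^^^ f a c := by decide +kernel
theorem f_zero : ∀ a : Fin 16, f 0 a = 0 := by decide +kernel
theorem f_zero' : ∀ a : Fin 16, f a 0 = 0 := by decide +kernel

instance : Std.Associative (fun a b : Fin 8 => a ^^^ b) := ⟨x8_assoc⟩
instance : Std.Commutative (fun a b : Fin 8 => a ^^^ b) := ⟨x8_comm⟩

/-- The underlying set of the group: a central extension of `F₂⁴` by `F₂³`. -/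
@[ext]
structure G where
  p : Fin 16
  z : Fin 8

instance : DecidableEq G := fun x y =>
  decidable_of_iff (x.p = y.p ∧ x.z = y.z) G.ext_iff.symm

instance : Mul G := ⟨fun x y => ⟨x.p ^^^ y.p, x.z ^^^ y.z ^^^ f x.p y.p⟩⟩
instance : One G := ⟨⟨0, 0⟩⟩
instance : Inv G := ⟨fun x => ⟨x.p, x.z ^^^ f x.p x.p⟩⟩

theorem mul_p (x y : G) : (x * y).p = x.p ^^^ y.p := rfl
theorem mul_z (x y : G) : (x * y).z = x.z ^^^ y.z ^^^ f x.p y.p := rfl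
theorem one_p : (1 : G).p = 0 := rfl
theorem one_z : (1 : G).z = 0 := rfl
theorem inv_p (x : G) : (x⁻¹).p = x.p := rfl
theorem inv_z (x : G) : (x⁻¹).z = x.z ^^^ f x.p x.p := rfl

instance : Group G := Group.ofLeftAxioms
  (by
    intro x y w
    ext1
    · simp only [mul_p, x16_assoc]
    · simp only [mul_p, mul_z, f_left, f_right]
      ac_rfl)
  (by
    intro x
    ext1
    · simp only [mul_p, one_p, x16_zero]
    · simp only [mul_z, one_p, one_z, f_zero, x8_zero, x8_zero'])
  (by
    intro x
    ext1
    · simp only [mul_p, inv_p, one_p, x16_self]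
    · simp only [mul_z, inv_p, inv_z, one_z]
      rw [x8_comm x.z, x8_assoc (f x.p x.p), x8_self, x8_zero', x8_self])

/-- `G` as a product of finite types. -/
def equiv : G ≃ Fin 16 × Fin 8 where
  toFun x := (x.p, x.z)
  invFun y := ⟨y.1, y.2⟩
  left_inv _ := rfl
  right_inv _ := rfl

theorem sq_eq (x : G) : x * x = ⟨0, f x.p x.p⟩ := by
  ext1
  · simp only [mul_p, x16_self]
  · simp only [mul_z, x8_self, x8_zero]

/-- The commutator form. -/
def b (u v : Fin 16) : Fin 8 := f u v ^^^ f v u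

theorem b_zero : ∀ u v, b u v = 0 → f u v = f v u := by decide +kernel
theorem b_eq : ∀ u v, f u v = b u v ^^^ f v u := by decide +kernel

/-- Central elements. -/
theorem comm_eq (x y : G) : x * y * (y * x)⁻¹ = ⟨0, b x.p y.p⟩ := by
  rw [mul_inv_eq_iff_eq_mul]
  ext1
  · simp only [mul_p, x16_zero]
    exact x16_comm _ _
  · simp only [mul_p, mul_z, f_zero, b, x8_zero']
    rw [show f x.p y.p ^^^ f y.p x.p ^^^ (y.z ^^^ x.z ^^^ f y.p x.p) =
      x.z ^^^ y.z ^^^ f x.p y.p ^^^ (f y.p x.p ^^^ f y.p x.p) by ac_rfl, x8_self, x8_zero']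

theorem cen_mul (a c : Fin 8) : (⟨0, a⟩ : G) * ⟨0, c⟩ = ⟨0, a ^^^ c⟩ := by
  ext1
  · rfl
  · simp only [mul_z, f_zero, x8_zero']

theorem cen_inj {a c : Fin 8} (h : (⟨0, a⟩ : G) = ⟨0, c⟩) : a = c := congrArg G.z h

/-- The action on `F₂⁴` of the linear map with prescribed images of the basis. -/
def lin (w1 w2 w3 w4 u : Fin 16) : Fin 16 :=
  (if u.val.testBit 0 then w1 else 0) ^^^ (if u.val.testBit 1 then w2 else 0) ^^^
  (if u.val.testBit 2 then w3 else 0) ^^^ (if u.val.testBit 3 then w4 else 0)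

theorem key : ∀ w1 w2 : Fin 16, f w1 w1 = f w2 w2 → b w1 w2 = f w1 w1 →
    ∀ w3 : Fin 16, f w3 w3 = f w1 w1 →
    ∀ w4 : Fin 16, f w4 w4 = b w2 w3 → b w1 w4 = b w1 w3 →
      b w2 w4 = f w1 w1 ^^^ b w1 w3 → b w3 w4 = b w1 w3 ^^^ f w4 w4 →
    ∀ u : Fin 16, b u (lin w1 w2 w3 w4 u) = 0 := by decide +kernel

theorem lin_id : ∀ u : Fin 16, lin 1 2 4 8 u = u := by decide +kernel

theorem cen_sq : ∀ c : Fin 8, ∃ u v : Fin 16, f u u ^^^ f v v = c := by decide +kernel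

section
variable (φ : G →* G)

theorem map_sq (x : G) : φ ⟨0, f x.p x.p⟩ = ⟨0, f (φ x).p (φ x).p⟩ := by
  rw [← sq_eq, map_mul, sq_eq]

theorem map_comm (x y : G) : φ ⟨0, b x.p y.p⟩ = ⟨0, b (φ x).p (φ y).p⟩ := by
  rw [← comm_eq, ← comm_eq, map_mul, map_inv, map_mul, map_mul]

theorem map_cen (c : Fin 8) : (φ ⟨0, c⟩).p = 0 := by
  obtain ⟨u, v, rfl⟩ := cen_sq c
  rw [← cen_mul, map_mul, mul_p, map_sq φ ⟨u, 0⟩, map_sq φ ⟨v, 0⟩]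
  rfl

theorem map_p (x : G) : (φ x).p = (φ ⟨x.p, 0⟩).p := by
  have h : x = ⟨x.p, 0⟩ * ⟨0, x.z⟩ := by
    ext1
    · simp only [mul_p, x16_zero']
    · simp only [mul_z, f_zero', x8_zero, x8_zero']
  conv_lhs => rw [h]
  rw [map_mul, mul_p, map_cen, x16_zero']

theorem map_add (u v : Fin 16) :
    (φ ⟨u ^^^ v, 0⟩).p = (φ ⟨u, 0⟩).p ^^^ (φ ⟨v, 0⟩).p := by
  rw [← mul_p, ← map_mul, map_p φ (⟨u, 0⟩ * ⟨v, 0⟩), mul_p]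

theorem map_if (c : Prop) [Decidable c] (u : Fin 16) :
    (φ ⟨if c then u else 0, 0⟩).p = if c then (φ ⟨u, 0⟩).p else 0 := by
  split_ifs
  · rfl
  · exact map_cen φ 0

theorem map_lin (u : Fin 16) :
    (φ ⟨u, 0⟩).p =
      lin (φ ⟨1, 0⟩).p (φ ⟨2, 0⟩).p (φ ⟨4, 0⟩).p (φ ⟨8, 0⟩).p u := by
  conv_lhs => rw [← lin_id u]
  simp only [lin, map_add, map_if]

end

theorem isE : IsEGroup G := by
  intro φ x
  suffices h : b x.p (φ x).p = 0 by
    have h' := comm_eq x (φ x)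
    rw [h] at h'
    exact mul_inv_eq_one.mp h'
  rw [map_p, map_lin]
  have s1 := map_sq φ ⟨1, 0⟩
  have s2 := map_sq φ ⟨2, 0⟩
  have s3 := map_sq φ ⟨4, 0⟩
  have s4 := map_sq φ ⟨8, 0⟩
  have c12 := map_comm φ ⟨1, 0⟩ ⟨2, 0⟩
  have c13 := map_comm φ ⟨1, 0⟩ ⟨4, 0⟩
  have c14 := map_comm φ ⟨1, 0⟩ ⟨8, 0⟩
  have c23 := map_comm φ ⟨2, 0⟩ ⟨4, 0⟩
  have c24 := map_comm φ ⟨2, 0⟩ ⟨8, 0⟩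
  have c34 := map_comm φ ⟨4, 0⟩ ⟨8, 0⟩
  simp only [] at s1 s2 s3 s4 c12 c13 c14 c23 c24 c34
  rw [show f 1 1 = 3 by decide +kernel] at s1
  rw [show f 2 2 = 3 by decide +kernel] at s2
  rw [show f 4 4 = 3 by decide +kernel] at s3
  rw [show f 8 8 = 7 by decide +kernel] at s4
  rw [show b 1 2 = 3 by decide +kernel] at c12
  rw [show b 1 4 = 5 by decide +kernel] at c13
  rw [show b 1 8 = 5 by decide +kernel] at c14
  rw [show b 2 4 = 7 by decide +kernel] at c23
  rw [show b 2 8 = 3 ^^^ 5 by decide +kernel, ← cen_mul, map_mul, s1, c13, cen_mul] at c24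
  rw [show b 4 8 = 5 ^^^ 7 by decide +kernel, ← cen_mul, map_mul, s4, c13, cen_mul] at c34
  exact key _ _ (cen_inj (s1.symm.trans s2)) (cen_inj (c12.symm.trans s1)) _
    (cen_inj (s3.symm.trans s1)) _ (cen_inj (s4.symm.trans c23)) (cen_inj (c14.symm.trans c13))
    (cen_inj c24.symm) (cen_inj c34.symm) _

end E128

/-- There exists a non-abelian finite group of order `2 ^ 7 = 128` that is an
`E`-group. -/
theorem exists_nonabelian_EGroup_card_128 :
    ∃ (G : Type) (_ : Group G), Finite G ∧ Nat.card G = 2 ^ 7 ∧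
      IsEGroup G ∧ ∃ x y : G, x * y ≠ y * x := by
  refine ⟨E128.G, inferInstance, Finite.of_equiv _ E128.equiv.symm, ?_, E128.isE,
    ⟨1, 0⟩, ⟨2, 0⟩, by decide +kernel⟩
  rw [Nat.card_congr E128.equiv]
  simp
end
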